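/- Let α < 0 and r > 0, and let D ⊆ {ζ ∈ ℂ : Re ζ < β} for some β < α, with D having an accumulation point in the half-plane {Re ζ < β}. Then for every τ ∈ V_{α,r} with τ(0) = τ'(0) = 0, with associated extension F of its Laplace transform, and every ε > 0, there exist n ∈ ℕ, ζ_1, …, ζ_n ∈ D, and c_1, …, c_n ∈ ℂ such that sup_{x≥0} | τ'(x) − Σ_{j=1}^n c_j ζ_j e^{ζ_j x} | + sup_{s∈R̄_{α,r}} | F(s) − Σ_{j=1}^n c_j/(s−ζ_j) | < ε. That is, V⁰_{α,r} is contained in the closure of span{e_ζ : ζ ∈ D} in V_{α,r}. -/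

import Mathlib

open Filter Set MeasureTheory

/-- The Laplace transform `L{f;s} = ∫_0^∞ f(x) e^{-sx} dx`. -/
noncomputable def Laplace (f : ℝ → ℂ) (s : ℂ) : ℂ :=
  ∫ x in Set.Ioi (0 : ℝ), f x * Complex.exp (-(s * (x : ℂ)))

/-- The closed rectangle `R̄_{α,r} = {s : α ≤ Re s ≤ 1, |Im s| ≤ r}`. -/
def Rbar (α r : ℝ) : Set ℂ := {s : ℂ | α ≤ s.re ∧ s.re ≤ 1 ∧ |s.im| ≤ r}

/-- The open rectangle `R_{α,r} = {s : α < Re s < 1, |Im s| < r}`. -/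
def Ropen (α r : ℝ) : Set ℂ := {s : ℂ | α < s.re ∧ s.re < 1 ∧ |s.im| < r}

open scoped NNReal Topology BoundedContinuousFunction FourierTransform

/-!
In the Banach space of pairs `(g, G)`, with `g` bounded on `[0, ∞)` and `G` continuous on the
rectangle, `e_ζ` is the pair `(ζ e_ζ, 1/(· - ζ))`, which depends analytically on `ζ` in the left
half-plane minus the rectangle. By the identity theorem in the quotient by the closed span of
`{e_ζ : ζ ∈ D}`, that closed span contains `e_ζ` for every such `ζ`.

If `τ'` decays exponentially, `F` is analytic beyond the rectangle and `L{τ'; s} = s F(s)` is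
integrable on vertical lines, then Laplace inversion, with the contour pushed around the rectangle
by Cauchy's theorem, writes `τ'` as an integral of pairs `e_ζ`; the second component of that
integral is forced to be `F`, since `L{g; s} - s G(s)` is independent of `s` on the closed span.
The general case follows by approximation: a double moving average produces the integrability,
damping by `e^{-ηx}` the decay, and the dilation `τ(cx)`, `c → 1+`, the room around the rectangle.
-/

section Rectangles

variable {α r : ℝ}

lemma Rbar_eq_reProdIm (α r : ℝ) : Rbar α r = Icc α 1 ×ℂ Icc (-r) r := by
  ext s
  simp only [Rbar, mem_ofPred_eq, Complex.mem_reProdIm, mem_Icc, abs_le]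
  tauto

lemma Ropen_eq_reProdIm (α r : ℝ) : Ropen α r = Ioo α 1 ×ℂ Ioo (-r) r := by
  ext s
  simp only [Ropen, mem_ofPred_eq, Complex.mem_reProdIm, mem_Ioo, abs_lt]
  tauto

lemma isCompact_Rbar (α r : ℝ) : IsCompact (Rbar α r) := by
  rw [Rbar_eq_reProdIm]
  exact isCompact_Icc.reProdIm isCompact_Icc

instance compactSpace_Rbar (α r : ℝ) : CompactSpace (Rbar α r) :=
  isCompact_iff_compactSpace.mp (isCompact_Rbar α r)

lemma isOpen_Ropen (α r : ℝ) : IsOpen (Ropen α r) := by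
  rw [Ropen_eq_reProdIm]
  exact isOpen_Ioo.reProdIm isOpen_Ioo

lemma Ropen_subset_Rbar (α r : ℝ) : Ropen α r ⊆ Rbar α r :=
  fun _ h => ⟨h.1.le, h.2.1.le, h.2.2.le⟩

lemma Rbar_subset_closure_Ropen (hα : α < 1) (hr : 0 < r) : Rbar α r ⊆ closure (Ropen α r) := by
  rw [Ropen_eq_reProdIm, Complex.closure_reProdIm, closure_Ioo hα.ne, closure_Ioo (by linarith),
    Rbar_eq_reProdIm]

lemma isPreconnected_Ropen (α r : ℝ) : IsPreconnected (Ropen α r) := by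
  rw [Ropen_eq_reProdIm]
  exact (((convex_Ioo α 1).linear_preimage Complex.reLm).inter
    ((convex_Ioo (-r) r).linear_preimage Complex.imLm)).isPreconnected

end Rectangles

section BoundedExp

lemma norm_exp_mul_ofReal (ζ : ℂ) (x : ℝ) :
    ‖Complex.exp (ζ * (x : ℂ))‖ = Real.exp (ζ.re * x) := by
  rw [Complex.norm_exp, Complex.re_mul_ofReal]

lemma norm_exp_mul_nnreal_le_one {ζ : ℂ} (hζ : ζ.re ≤ 0) (x : ℝ≥0) :
    ‖Complex.exp (ζ * ((x : ℝ) : ℂ))‖ ≤ 1 := by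
  rw [norm_exp_mul_ofReal]
  exact Real.exp_le_one_iff.mpr (mul_nonpos_of_nonpos_of_nonneg hζ x.2)

lemma mul_exp_neg_mul_le {a x : ℝ} (ha : 0 < a) : x * Real.exp (-(a * x)) ≤ 1 / a := by
  have h := Real.add_one_le_exp (a * x)
  rw [Real.exp_neg, ← div_eq_mul_inv, div_le_div_iff₀ (Real.exp_pos _) ha]
  linarith

lemma sq_mul_exp_neg_mul_le {a x : ℝ} (ha : 0 < a) (hx : 0 ≤ x) :
    x ^ 2 * Real.exp (-(a * x)) ≤ 2 / a ^ 2 := by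
  have hax : 0 ≤ a * x := mul_nonneg ha.le hx
  have h := Real.quadratic_le_exp_of_nonneg hax
  rw [Real.exp_neg, ← div_eq_mul_inv, div_le_div_iff₀ (Real.exp_pos _) (by positivity)]
  linarith [mul_pow a x 2]

lemma norm_exp_mul_sub_taylor_le (ζ w : ℂ) {x : ℝ} (hx : 0 ≤ x) :
    ‖Complex.exp (w * x) - Complex.exp (ζ * x) - (w - ζ) * (x * Complex.exp (ζ * x))‖ ≤
      ‖w - ζ‖ ^ 2 * (x ^ 2 * Real.exp ((ζ.re + ‖w - ζ‖) * x)) := by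
  have hw : Complex.exp (w * x) = Complex.exp (ζ * x) * Complex.exp ((w - ζ) * x) := by
    rw [← Complex.exp_add]
    ring_nf
  have hnorm : ‖(w - ζ) * (x : ℂ)‖ = ‖w - ζ‖ * x := by
    rw [norm_mul, Complex.norm_real, Real.norm_of_nonneg hx]
  have htaylor := Complex.norm_exp_sub_sum_le_norm_mul_exp ((w - ζ) * x) 2
  rw [hnorm] at htaylor
  calc _ = ‖Complex.exp (ζ * x) * (Complex.exp ((w - ζ) * x) -
          ∑ m ∈ Finset.range 2, ((w - ζ) * x) ^ m / (m.factorial : ℂ))‖ := by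
        rw [hw]
        simp only [Finset.sum_range_succ, Finset.range_zero, Finset.sum_empty, pow_zero, pow_one,
          Nat.factorial, Nat.cast_one, mul_one, Nat.succ_eq_add_one, zero_add]
        ring_nf
    _ ≤ Real.exp (ζ.re * x) * ((‖w - ζ‖ * x) ^ 2 * Real.exp (‖w - ζ‖ * x)) := by
        rw [norm_mul, norm_exp_mul_ofReal]
        gcongr
    _ = _ := by
        rw [add_mul, Real.exp_add]
        ring

/-- The exponential `e_ζ` as a bounded continuous function on `[0, ∞)`; the value `0` for
`Re ζ > 0`, where `e_ζ` is unbounded, is junk. -/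
noncomputable def boundedExp (ζ : ℂ) : ℝ≥0 →ᵇ ℂ :=
  if h : ζ.re ≤ 0 then
    .ofNormedAddCommGroup (fun x : ℝ≥0 => Complex.exp (ζ * ((x : ℝ) : ℂ))) (by fun_prop) 1
      (norm_exp_mul_nnreal_le_one h)
  else 0

lemma boundedExp_apply {ζ : ℂ} (hζ : ζ.re ≤ 0) (x : ℝ≥0) :
    boundedExp ζ x = Complex.exp (ζ * ((x : ℝ) : ℂ)) := by
  simp [boundedExp, hζ]

lemma norm_boundedExp_le (ζ : ℂ) : ‖boundedExp ζ‖ ≤ 1 := by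
  by_cases hζ : ζ.re ≤ 0
  · refine (BoundedContinuousFunction.norm_le zero_le_one).2 fun x => ?_
    rw [boundedExp_apply hζ]
    exact norm_exp_mul_nnreal_le_one hζ x
  · simp [boundedExp, hζ]

lemma differentiableAt_boundedExp {ζ : ℂ} (hζ : ζ.re < 0) : DifferentiableAt ℂ boundedExp ζ := by
  obtain ⟨a, ha, hζa⟩ : ∃ a > 0, ζ.re = -(a + a) := ⟨-ζ.re / 2, by linarith, by ring⟩
  let d : ℝ≥0 →ᵇ ℂ := .ofNormedAddCommGroup
    (fun x : ℝ≥0 => ((x : ℝ) : ℂ) * Complex.exp (ζ * ((x : ℝ) : ℂ))) (by fun_prop) (1 / (-ζ.re))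
    fun x => by
      simpa [norm_exp_mul_ofReal] using mul_exp_neg_mul_le (x := x) (neg_pos.2 hζ)
  have hrem : ∀ᶠ w in 𝓝 ζ,
      ‖boundedExp w - boundedExp ζ - (w - ζ) • d‖ ≤ 2 / a ^ 2 * ‖‖w - ζ‖ ^ 2‖ := by
    filter_upwards [Metric.ball_mem_nhds ζ ha] with w hw
    rw [mem_ball_iff_norm] at hw
    have hwre : w.re ≤ 0 := by
      have := (Complex.re_le_norm (w - ζ)).trans hw.le
      rw [Complex.sub_re] at this
      linarith
    refine (BoundedContinuousFunction.norm_le (by positivity)).2 fun x => ?_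
    calc ‖(boundedExp w - boundedExp ζ - (w - ζ) • d) x‖
        = ‖Complex.exp (w * (x : ℝ)) - Complex.exp (ζ * (x : ℝ)) -
            (w - ζ) * ((x : ℝ) * Complex.exp (ζ * (x : ℝ)))‖ := by
          simp [d, boundedExp_apply hwre, boundedExp_apply hζ.le]
      _ ≤ ‖w - ζ‖ ^ 2 * ((x : ℝ) ^ 2 * Real.exp ((ζ.re + ‖w - ζ‖) * x)) :=
          norm_exp_mul_sub_taylor_le ζ w x.2
      _ ≤ ‖w - ζ‖ ^ 2 * ((x : ℝ) ^ 2 * Real.exp (-(a * x))) := by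
          rw [← neg_mul]
          gcongr
          linarith
      _ ≤ ‖w - ζ‖ ^ 2 * (2 / a ^ 2) := by
          gcongr
          exact sq_mul_exp_neg_mul_le ha x.2
      _ = _ := by rw [Real.norm_of_nonneg (by positivity), mul_comm]
  have hdiff : DifferentiableAt ℂ (fun w => boundedExp w - boundedExp ζ - (w - ζ) • d) ζ :=
    ((Asymptotics.IsBigO.of_bound _ hrem).hasFDerivAt (𝕜 := ℂ) one_lt_two).differentiableAt
  have hlin : DifferentiableAt ℂ (fun w => boundedExp ζ + (w - ζ) • d) ζ := by fun_prop
  exact (hdiff.add hlin).congr_of_eventuallyEq (.of_forall fun w => by simp)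

end BoundedExp

section ClosedSpan

variable {α r : ℝ}

/-- The Banach space carrying the norm `‖·‖_{α,r}`: a function `τ` with Laplace extension `F`
corresponds to the pair `(τ', F)`. -/
abbrev PairSpace (α r : ℝ) : Type := (ℝ≥0 →ᵇ ℂ) × C(Rbar α r, ℂ)

/-- The half-plane of decaying exponents, with the poles forbidden by the rectangle removed. -/
def expDomain (α r : ℝ) : Set ℂ := {ζ | ζ.re < 0} \ Rbar α r

lemma isOpen_expDomain (α r : ℝ) : IsOpen (expDomain α r) :=
  (isOpen_lt Complex.continuous_re continuous_const).sdiff (isCompact_Rbar α r).isClosed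

lemma isPreconnected_expDomain (hα : α < 0) : IsPreconnected (expDomain α r) := by
  have hunion : expDomain α r =
      ({ζ : ℂ | ζ.re < α} ∪ ({ζ : ℂ | ζ.re < 0} ∩ {ζ : ℂ | r < ζ.im})) ∪
        ({ζ : ℂ | ζ.re < 0} ∩ {ζ : ℂ | ζ.im < -r}) := by
    ext ζ
    simp only [expDomain, Rbar, abs_le, Set.mem_sdiff, mem_ofPred_eq, mem_union, mem_inter_iff]
    grind
  rw [hunion]
  refine IsPreconnected.union ⟨α - 1, -r - 1⟩ (Or.inl (by simp)) (by simp; linarith)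
    (IsPreconnected.union ⟨α - 1, r + 1⟩ (by simp) (by simp; linarith) ?_ ?_) ?_
  · exact (convex_halfSpace_re_lt α).isPreconnected
  · exact ((convex_halfSpace_re_lt 0).inter (convex_halfSpace_im_gt r)).isPreconnected
  · exact ((convex_halfSpace_re_lt 0).inter (convex_halfSpace_im_lt (-r))).isPreconnected

/-- The inclusion of the rectangle in `ℂ`; its resolvent at `ζ` is `s ↦ 1/(ζ - s)`. -/
def rectIncl (α r : ℝ) : C(Rbar α r, ℂ) := ⟨Subtype.val, continuous_subtype_val⟩

lemma algebraMap_sub_rectIncl_apply (ζ : ℂ) (s : Rbar α r) :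
    (algebraMap ℂ C(Rbar α r, ℂ) ζ - rectIncl α r) s = ζ - s := by
  simp [rectIncl, Algebra.algebraMap_eq_smul_one]

lemma mem_resolventSet_rectIncl {ζ : ℂ} (hζ : ζ ∉ Rbar α r) :
    ζ ∈ resolventSet ℂ (rectIncl α r) := by
  rw [spectrum.mem_resolventSet_iff, ContinuousMap.isUnit_iff_forall_ne_zero]
  intro s hs
  rw [algebraMap_sub_rectIncl_apply, sub_eq_zero] at hs
  exact hζ (hs ▸ s.2)

/-- The point of `PairSpace α r` corresponding to `e_ζ`, namely `(ζ e_ζ, s ↦ 1/(s - ζ))`; it has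
this meaning only for `ζ ∈ expDomain α r`. -/
noncomputable def expPair (α r : ℝ) (ζ : ℂ) : PairSpace α r :=
  (ζ • boundedExp ζ, -resolvent (rectIncl α r) ζ)

lemma expPair_fst_apply {ζ : ℂ} (hζ : ζ ∈ expDomain α r) (x : ℝ≥0) :
    (expPair α r ζ).1 x = ζ * Complex.exp (ζ * ((x : ℝ) : ℂ)) := by
  rw [← boundedExp_apply hζ.1.le]
  rfl

lemma expPair_snd_apply {ζ : ℂ} (hζ : ζ ∈ expDomain α r) (s : Rbar α r) :
    (expPair α r ζ).2 s = 1 / ((s : ℂ) - ζ) := by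
  have hinv : resolvent (rectIncl α r) ζ * (algebraMap ℂ _ ζ - rectIncl α r) = 1 :=
    Ring.inverse_mul_cancel _ (spectrum.mem_resolventSet_iff.1 (mem_resolventSet_rectIncl hζ.2))
  have hinv_apply : resolvent (rectIncl α r) ζ s * (ζ - s) = 1 := by
    rw [← algebraMap_sub_rectIncl_apply, ← ContinuousMap.mul_apply, hinv, ContinuousMap.one_apply]
  rw [expPair, ContinuousMap.neg_apply, ← neg_sub ζ, one_div, inv_neg, neg_inj]
  exact eq_inv_of_mul_eq_one_left hinv_apply

lemma norm_expPair_fst_le (α r : ℝ) (ζ : ℂ) : ‖(expPair α r ζ).1‖ ≤ ‖ζ‖ :=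
  (norm_smul_le _ _).trans (mul_le_of_le_one_right (norm_nonneg ζ) (norm_boundedExp_le ζ))

lemma differentiableOn_expPair (α r : ℝ) :
    DifferentiableOn ℂ (expPair α r) (expDomain α r) := fun _ hζ =>
  ((differentiableAt_id.smul (differentiableAt_boundedExp hζ.1)).prodMk
    (spectrum.hasDerivAt_resolvent_const_left
      (mem_resolventSet_rectIncl hζ.2)).differentiableAt.neg).differentiableWithinAt

/-- The closed span of the exponentials with exponents in `D`. -/
noncomputable def closedSpan (α r : ℝ) (D : Set ℂ) : Submodule ℂ (PairSpace α r) :=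
  (Submodule.span ℂ (expPair α r '' D)).topologicalClosure

lemma isClosed_closedSpan (α r : ℝ) (D : Set ℂ) :
    IsClosed (closedSpan α r D : Set (PairSpace α r)) :=
  Submodule.isClosed_topologicalClosure _

lemma expPair_mem_closedSpan {D : Set ℂ} {ζ : ℂ} (hζ : ζ ∈ D) :
    expPair α r ζ ∈ closedSpan α r D :=
  Submodule.le_topologicalClosure _ (Submodule.subset_span (mem_image_of_mem _ hζ))

lemma closedSpan_le {D : Set ℂ} {N : Submodule ℂ (PairSpace α r)}
    (hN : IsClosed (N : Set (PairSpace α r))) (h : ∀ ζ ∈ D, expPair α r ζ ∈ N) :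
    closedSpan α r D ≤ N :=
  Submodule.topologicalClosure_minimal _ (Submodule.span_le.2 (image_subset_iff.2 h)) hN

-- The identity theorem for the class of `expPair α r ζ` modulo the closed span of `D`.
lemma closedSpan_expDomain_le_of_accPt (hα : α < 0) {D : Set ℂ} {z : ℂ}
    (hz : z ∈ expDomain α r) (hacc : AccPt z (𝓟 D)) :
    closedSpan α r (expDomain α r) ≤ closedSpan α r D := by
  set N := closedSpan α r D
  have : IsClosed (N : Set (PairSpace α r)) := isClosed_closedSpan α r D
  have hanalytic : AnalyticOnNhd ℂ (fun ζ => N.mkQL (expPair α r ζ)) (expDomain α r) :=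
    (N.mkQL.differentiable.comp_differentiableOn
      (differentiableOn_expPair α r)).analyticOnNhd (isOpen_expDomain α r)
  have hzero_iff : ∀ ζ, N.mkQL (expPair α r ζ) = 0 ↔ expPair α r ζ ∈ N := fun ζ => by
    rw [Submodule.mkQL_apply, Submodule.mkQ_apply, Submodule.Quotient.mk_eq_zero]
  have hfreq : ∃ᶠ ζ in 𝓝[≠] z, N.mkQL (expPair α r ζ) = 0 := by
    rw [frequently_nhdsWithin_iff]
    exact (accPt_iff_frequently.1 hacc).mono fun ζ hζ =>
      ⟨(hzero_iff ζ).2 (expPair_mem_closedSpan hζ.2), hζ.1⟩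
  exact closedSpan_le (isClosed_closedSpan α r D) fun ζ hζ => (hzero_iff ζ).1 <|
    hanalytic.eqOn_zero_of_preconnected_of_frequently_eq_zero
      (isPreconnected_expDomain hα) hz hfreq hζ

lemma exists_mem_closedSpan_eq_integral {D : Set ℂ} (hD : D ⊆ expDomain α r)
    {X : Type*} [MeasurableSpace X] {μ : Measure X} {φ γ : X → ℂ} (hγ : ∀ᵐ t ∂μ, γ t ∈ D)
    (hint : Integrable (fun t => φ t • expPair α r (γ t)) μ) :
    ∃ p ∈ closedSpan α r D,
      ∀ x : ℝ≥0, p.1 x = ∫ t, φ t * (γ t * Complex.exp (γ t * ((x : ℝ) : ℂ))) ∂μ := by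
  set N := closedSpan α r D
  have : IsClosed (N : Set (PairSpace α r)) := isClosed_closedSpan α r D
  refine ⟨∫ t, φ t • expPair α r (γ t) ∂μ, ?_, fun x => ?_⟩
  · have hquot : N.mkQL (∫ t, φ t • expPair α r (γ t) ∂μ) = 0 := by
      rw [← N.mkQL.integral_comp_comm hint]
      refine integral_eq_zero_of_ae (hγ.mono fun t ht => ?_)
      simpa using Or.inr (expPair_mem_closedSpan ht)
    simpa using hquot
  · let eval : PairSpace α r →L[ℂ] ℂ :=
      (BoundedContinuousFunction.evalCLM ℂ x).comp (.fst ℂ _ _)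
    rw [show (∫ t, φ t • expPair α r (γ t) ∂μ).1 x = eval (∫ t, φ t • expPair α r (γ t) ∂μ) from
      rfl, ← eval.integral_comp_comm hint]
    refine integral_congr_ae (hγ.mono fun t ht => ?_)
    simp [eval, expPair_fst_apply (hD ht)]

end ClosedSpan

section Uniqueness

variable {α r : ℝ}

lemma eqOn_zero_of_mul_eq_const (hα : α < 0) (hr : 0 < r) {f : ℂ → ℂ} {c : ℂ}
    (hf : DifferentiableOn ℂ f (Ropen α r)) (hfc : ContinuousOn f (Rbar α r))
    (hc : ∀ s ∈ Ropen α r, 0 < s.re → s * f s = c) : EqOn f 0 (Rbar α r) := by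
  have hhalf : ((1 / 2 : ℝ) : ℂ) ∈ Ropen α r :=
    ⟨by rw [Complex.ofReal_re]; linarith, by norm_num, by rwa [Complex.ofReal_im, abs_zero]⟩
  have hconst : EqOn (fun s => s * f s) (fun _ => c) (Ropen α r) := by
    refine ((differentiableOn_id.mul hf).analyticOnNhd
      (isOpen_Ropen α r)).eqOn_of_preconnected_of_eventuallyEq analyticOnNhd_const
      (isPreconnected_Ropen α r) hhalf ?_
    filter_upwards [(isOpen_Ropen α r).mem_nhds hhalf,
      (isOpen_lt continuous_const Complex.continuous_re).mem_nhds
        (by simp : (0 : ℝ) < ((1 / 2 : ℝ) : ℂ).re)] with s hs hs0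
    exact hc s hs hs0
  have hc0 : c = 0 := by
    simpa using (hconst (⟨by simpa, by simp, by simpa⟩ : (0 : ℂ) ∈ Ropen α r)).symm
  have hoff : EqOn f 0 (Ropen α r \ {0}) := fun s hs =>
    (mul_eq_zero.1 ((hconst hs.1).trans hc0)).resolve_left hs.2
  have hdense : Rbar α r ⊆ closure (Ropen α r \ {0}) :=
    (Rbar_subset_closure_Ropen (hα.trans one_pos) hr).trans <| closure_minimal
      ((dense_compl_singleton 0).open_subset_closure_inter (isOpen_Ropen α r)) isClosed_closure
  exact hoff.of_subset_closure hfc continuousOn_const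
    (sdiff_subset.trans (Ropen_subset_Rbar α r)) hdense

lemma integrableOn_boundedContinuous_mul_exp_neg (g : ℝ≥0 →ᵇ ℂ) {s : ℂ} (hs : 0 < s.re) :
    IntegrableOn (fun x : ℝ => g x.toNNReal * Complex.exp (-(s * (x : ℂ)))) (Ioi 0) := by
  have hexp : IntegrableOn (fun x : ℝ => Complex.exp (-s * (x : ℂ))) (Ioi 0) :=
    integrableOn_exp_mul_complex_Ioi (by simpa using hs) 0
  simp only [← neg_mul]
  exact hexp.bdd_mul (Continuous.aestronglyMeasurable (by fun_prop))
    (.of_forall fun x => g.norm_coe_le_norm _)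

/-- The Laplace transform at a point of the right half-plane, as a continuous functional. -/
noncomputable def laplaceCLM (s : ℂ) (hs : 0 < s.re) : (ℝ≥0 →ᵇ ℂ) →L[ℂ] ℂ :=
  LinearMap.mkContinuous
    { toFun := fun g => Laplace (fun x => g x.toNNReal) s
      map_add' := fun f g => by
        simp only [Laplace]
        rw [← integral_add (integrableOn_boundedContinuous_mul_exp_neg f hs)
          (integrableOn_boundedContinuous_mul_exp_neg g hs)]
        simp only [BoundedContinuousFunction.coe_add, Pi.add_apply, add_mul]
      map_smul' := fun c g => by
        simp only [Laplace, BoundedContinuousFunction.coe_smul, smul_eq_mul, mul_assoc,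
          integral_const_mul, RingHom.id_apply] }
    (∫ x in Ioi (0 : ℝ), ‖Complex.exp (-(s * (x : ℂ)))‖) fun g => by
      have hexp : IntegrableOn (fun x : ℝ => Complex.exp (-(s * (x : ℂ)))) (Ioi 0) := by
        simpa only [neg_mul] using
          integrableOn_exp_mul_complex_Ioi (a := -s) (by simpa using hs) 0
      rw [mul_comm, ← integral_const_mul]
      refine norm_integral_le_of_norm_le (hexp.norm.const_mul ‖g‖) (.of_forall fun x => ?_)
      rw [norm_mul]
      gcongr
      exact g.norm_coe_le_norm _

/-- The functional `(g, G) ↦ L{g; s} - s G(s)`. On a pair `(τ', F)` coming from a function `τ` it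
takes the value `-τ(0)`, whatever `s` is. -/
noncomputable def laplaceDefect (s : Rbar α r) (hs : 0 < (s : ℂ).re) : PairSpace α r →L[ℂ] ℂ :=
  (laplaceCLM s hs).comp (.fst ℂ _ _) -
    (s : ℂ) • (ContinuousMap.evalCLM ℂ s).comp (.snd ℂ _ _)

lemma laplaceDefect_apply (s : Rbar α r) (hs : 0 < (s : ℂ).re) (p : PairSpace α r) :
    laplaceDefect s hs p = Laplace (fun x => p.1 x.toNNReal) s - s * p.2 s :=
  rfl

lemma laplaceDefect_expPair (s : Rbar α r) (hs : 0 < (s : ℂ).re) {ζ : ℂ}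
    (hζ : ζ ∈ expDomain α r) : laplaceDefect s hs (expPair α r ζ) = -1 := by
  have hre : (ζ - s).re < 0 := by
    rw [Complex.sub_re]
    linarith [show ζ.re < 0 from hζ.1]
  have hne : (s : ℂ) - ζ ≠ 0 := sub_ne_zero.2 fun h => by simp [h] at hre
  have hlaplace : Laplace (fun x => (expPair α r ζ).1 x.toNNReal) s = ζ / (s - ζ) := by
    have hcongr : ∀ x ∈ Ioi (0 : ℝ), (expPair α r ζ).1 x.toNNReal *
        Complex.exp (-((s : ℂ) * (x : ℂ))) = ζ * Complex.exp ((ζ - s) * (x : ℂ)) := by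
      intro x hx
      rw [expPair_fst_apply hζ, Real.coe_toNNReal _ (le_of_lt hx), mul_assoc, ← Complex.exp_add]
      ring_nf
    rw [Laplace, setIntegral_congr_fun measurableSet_Ioi hcongr, integral_const_mul,
      integral_exp_mul_complex_Ioi hre, Complex.ofReal_zero, mul_zero, Complex.exp_zero, neg_div,
      ← div_neg, neg_sub, mul_one_div]
  rw [laplaceDefect_apply, hlaplace, expPair_snd_apply hζ]
  field_simp
  ring

lemma laplaceDefect_eq_of_mem_closedSpan {p : PairSpace α r}
    (hp : p ∈ closedSpan α r (expDomain α r)) (s t : Rbar α r) (hs : 0 < (s : ℂ).re)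
    (ht : 0 < (t : ℂ).re) : laplaceDefect s hs p = laplaceDefect t ht p := by
  have hker : p ∈ (laplaceDefect s hs - laplaceDefect t ht).ker :=
    closedSpan_le (ContinuousLinearMap.isClosed_ker _)
      (fun ζ hζ => by simp [LinearMap.mem_ker, laplaceDefect_expPair _ _ hζ]) hp
  rw [LinearMap.mem_ker] at hker
  simpa [sub_eq_zero] using hker

/-- Extension by zero of a function on the rectangle. -/
noncomputable def rectExtend (f : C(Rbar α r, ℂ)) : ℂ → ℂ := Function.extend Subtype.val f 0

lemma rectExtend_apply (f : C(Rbar α r, ℂ)) {s : ℂ} (hs : s ∈ Rbar α r) :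
    rectExtend f s = f ⟨s, hs⟩ :=
  Subtype.val_injective.extend_apply f 0 ⟨s, hs⟩

lemma continuousOn_rectExtend (f : C(Rbar α r, ℂ)) : ContinuousOn (rectExtend f) (Rbar α r) := by
  rw [continuousOn_iff_continuous_domRestrict]
  exact f.continuous.congr fun s => (rectExtend_apply f s.2).symm

/-- The pairs whose second component is analytic inside the rectangle. -/
noncomputable def analyticPairs (α r : ℝ) : Submodule ℂ (PairSpace α r) where
  carrier := {p | DifferentiableOn ℂ (rectExtend p.2) (Ropen α r)}
  add_mem' hp hq := (DifferentiableOn.add hp hq).congr fun s hs => by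
    simp [rectExtend_apply _ (Ropen_subset_Rbar α r hs)]
  zero_mem' := (differentiableOn_const (0 : ℂ)).congr fun s hs => by
    simp [rectExtend_apply _ (Ropen_subset_Rbar α r hs)]
  smul_mem' c _ hp := (DifferentiableOn.const_smul hp c).congr fun s hs => by
    simp [rectExtend_apply _ (Ropen_subset_Rbar α r hs)]

lemma isClosed_analyticPairs (α r : ℝ) : IsClosed (analyticPairs α r : Set (PairSpace α r)) := by
  rw [← isSeqClosed_iff_isClosed]
  intro u p hu hp
  have hunif : TendstoUniformlyOn (fun n => rectExtend (u n).2) (rectExtend p.2) atTop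
      (Ropen α r) := by
    have hsnd : TendstoUniformly (fun n => (u n).2) p.2 atTop :=
      ContinuousMap.tendsto_iff_tendstoUniformly.1 ((continuous_snd.tendsto p).comp hp)
    intro v hv
    filter_upwards [hsnd v hv] with n hn s hs
    simpa only [rectExtend_apply _ (Ropen_subset_Rbar α r hs)] using hn _
  exact hunif.tendstoLocallyUniformlyOn.differentiableOn (.of_forall hu) (isOpen_Ropen α r)

lemma closedSpan_le_analyticPairs (α r : ℝ) :
    closedSpan α r (expDomain α r) ≤ analyticPairs α r := by
  refine closedSpan_le (isClosed_analyticPairs α r) fun ζ hζ => ?_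
  have hinv : DifferentiableOn ℂ (fun s => 1 / (s - ζ)) (Ropen α r) :=
    (differentiableOn_const 1).div (by fun_prop) fun s hs =>
      sub_ne_zero.2 fun h => hζ.2 (h ▸ Ropen_subset_Rbar α r hs)
  exact hinv.congr fun s hs => by
    rw [rectExtend_apply _ (Ropen_subset_Rbar α r hs), expPair_snd_apply hζ]

lemma snd_eq_of_laplace_fst (hα : α < 0) (hr : 0 < r) {p : PairSpace α r}
    (hp : p ∈ closedSpan α r (expDomain α r)) {g : ℝ → ℂ} {H : ℂ → ℂ}
    (hg : ∀ x : ℝ≥0, p.1 x = g x) (hH : DifferentiableOn ℂ H (Ropen α r))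
    (hHc : ContinuousOn H (Rbar α r))
    (hL : ∀ s ∈ Ropen α r, 0 < s.re → Laplace g s = s * H s) (s : Rbar α r) : p.2 s = H s := by
  have hone : (1 : ℂ) ∈ Rbar α r := ⟨by simpa using by linarith, by simp, by simpa using hr.le⟩
  have hzero := eqOn_zero_of_mul_eq_const hα hr
    (c := laplaceDefect ⟨1, hone⟩ (by simp) p)
    (hH.sub (closedSpan_le_analyticPairs α r hp)) (hHc.sub (continuousOn_rectExtend p.2))
    (fun t ht ht0 => by
      have htR := Ropen_subset_Rbar α r ht
      rw [← laplaceDefect_eq_of_mem_closedSpan hp ⟨t, htR⟩ _ ht0, laplaceDefect_apply,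
        Pi.sub_apply, mul_sub, ← hL t ht ht0, rectExtend_apply _ htR]
      congr 1
      refine setIntegral_congr_fun measurableSet_Ioi fun x hx => ?_
      simp only [hg, Real.coe_toNNReal x (le_of_lt hx)]) s.2
  rw [Pi.sub_apply, Pi.zero_apply, sub_eq_zero, rectExtend_apply _ s.2] at hzero
  exact hzero.symm

end Uniqueness

section LaplaceLine

variable {f : ℝ → ℂ} {σ : ℝ}

lemma laplace_eq_integral (hf : ∀ x ≤ 0, f x = 0) (s : ℂ) :
    Laplace f s = ∫ x : ℝ, f x * Complex.exp (-(s * (x : ℂ))) :=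
  setIntegral_eq_integral_of_forall_compl_eq_zero fun x hx => by
    rw [hf x (not_lt.1 hx), zero_mul]

lemma norm_mul_exp_neg_line (f : ℝ → ℂ) (σ y x : ℝ) :
    ‖f x * Complex.exp (-((σ + y * Complex.I) * (x : ℂ)))‖ =
      ‖f x * Complex.exp (-(σ * (x : ℂ)))‖ := by
  rw [norm_mul, norm_mul, ← neg_mul, ← neg_mul, norm_exp_mul_ofReal, norm_exp_mul_ofReal]
  simp

lemma norm_laplace_line_le (hf : ∀ x ≤ 0, f x = 0) (y : ℝ) :
    ‖Laplace f (σ + y * Complex.I)‖ ≤ ∫ x : ℝ, ‖f x * Complex.exp (-(σ * (x : ℂ)))‖ := by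
  rw [laplace_eq_integral hf]
  simpa only [norm_mul_exp_neg_line] using norm_integral_le_integral_norm
    fun x : ℝ => f x * Complex.exp (-((σ + y * Complex.I) * (x : ℂ)))

lemma continuous_laplace_line (hfc : Continuous f) (hf : ∀ x ≤ 0, f x = 0)
    (hint : Integrable fun x : ℝ => f x * Complex.exp (-(σ * (x : ℂ)))) :
    Continuous fun y : ℝ => Laplace f (σ + y * Complex.I) := by
  simp only [laplace_eq_integral hf]
  refine continuous_of_dominated (fun y => Continuous.aestronglyMeasurable (by fun_prop))
    (fun y => .of_forall fun x => (norm_mul_exp_neg_line f σ y x).le) hint.norm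
    (.of_forall fun x => by fun_prop)

lemma fourier_eq_laplace_line (hf : ∀ x ≤ 0, f x = 0) (w : ℝ) :
    𝓕 (fun x : ℝ => f x * Complex.exp (-(σ * (x : ℂ)))) w =
      Laplace f (σ + ((2 * Real.pi * w : ℝ) : ℂ) * Complex.I) := by
  rw [Real.fourier_eq', laplace_eq_integral hf]
  congr 1 with x
  rw [smul_eq_mul, mul_left_comm, ← Complex.exp_add]
  congr 2
  simp only [RCLike.inner_apply, conj_trivial]
  push_cast
  ring

lemma laplace_inversion (hfc : Continuous f) (hf : ∀ x ≤ 0, f x = 0)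
    (hint : Integrable fun x : ℝ => f x * Complex.exp (-(σ * (x : ℂ))))
    (hline : Integrable fun y : ℝ => Laplace f (σ + y * Complex.I)) (x : ℝ) :
    f x = (1 / (2 * Real.pi) : ℂ) * ∫ y : ℝ, Laplace f (σ + y * Complex.I) *
      Complex.exp ((σ + y * Complex.I) * (x : ℂ)) := by
  set u : ℝ → ℂ := fun x => f x * Complex.exp (-(σ * (x : ℂ))) with hu
  have hfourier : 𝓕 u = fun w : ℝ => Laplace f (σ + ((2 * Real.pi * w : ℝ) : ℂ) * Complex.I) :=
    funext (fourier_eq_laplace_line hf)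
  have huf : Integrable (𝓕 u) := by
    rw [hfourier]
    exact hline.comp_mul_left' (by positivity : 2 * Real.pi ≠ 0)
  have hinv : u x = ∫ w : ℝ, (fun y : ℝ => Laplace f (σ + y * Complex.I) *
      Complex.exp (y * Complex.I * (x : ℂ))) (2 * Real.pi * w) := by
    rw [← congrFun ((by fun_prop : Continuous u).fourierInv_fourier_eq hint huf) x,
      Real.fourierInv_eq', hfourier]
    congr 1 with w
    rw [smul_eq_mul, mul_comm]
    congr 2
    simp only [RCLike.inner_apply, conj_trivial]
    push_cast
    ring
  rw [Measure.integral_comp_mul_left (fun y : ℝ => Laplace f (σ + y * Complex.I) *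
    Complex.exp (y * Complex.I * (x : ℂ))), abs_of_pos (by positivity), Complex.real_smul] at hinv
  calc f x = Complex.exp (σ * x) * u x := by
        rw [hu, mul_left_comm, ← Complex.exp_add, add_neg_cancel, Complex.exp_zero, mul_one]
    _ = _ := by
        rw [hinv, mul_left_comm, ← integral_const_mul]
        congr 1
        · push_cast
          ring
        · congr 1 with y
          rw [mul_left_comm, ← Complex.exp_add, ← add_mul]

end LaplaceLine

/-- Continuous functions on `ℝ` supported in `[0, ∞)` and of size `O(e^{-κx})`; for these the
Laplace transform is defined on `Re s > -κ`. -/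
structure CausalExpDecay (κ : ℝ) (f : ℝ → ℂ) : Prop where
  continuous : Continuous f
  eq_zero_of_nonpos : ∀ x ≤ 0, f x = 0
  exists_norm_le : ∃ C, ∀ x, ‖f x‖ ≤ C * Real.exp (-(κ * x))

lemma integrableOn_mul_exp_neg_of_norm_le {f : ℝ → ℂ} (hf : ContinuousOn f (Ici 0)) {C κ : ℝ}
    (hC : ∀ x, 0 ≤ x → ‖f x‖ ≤ C * Real.exp (-(κ * x))) {s : ℂ} (hs : -κ < s.re) :
    IntegrableOn (fun x : ℝ => f x * Complex.exp (-(s * (x : ℂ)))) (Ioi 0) := by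
  refine Integrable.mono' (g := fun x => C * Real.exp (-(κ + s.re) * x))
    ((exp_neg_integrableOn_Ioi 0 (by linarith)).const_mul C)
    (((hf.mono Ioi_subset_Ici_self).mul (by fun_prop)).aestronglyMeasurable measurableSet_Ioi)
    ((ae_restrict_iff' measurableSet_Ioi).2 (.of_forall fun x hx => ?_))
  rw [norm_mul, ← neg_mul, norm_exp_mul_ofReal, Complex.neg_re]
  calc ‖f x‖ * Real.exp (-s.re * x) ≤ C * Real.exp (-(κ * x)) * Real.exp (-s.re * x) := by
        gcongr
        exact hC x (le_of_lt hx)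
    _ = _ := by
        rw [mul_assoc, ← Real.exp_add]
        ring_nf

namespace CausalExpDecay

variable {κ : ℝ} {f : ℝ → ℂ}

lemma integrable_mul_exp_neg (hf : CausalExpDecay κ f) {s : ℂ} (hs : -κ < s.re) :
    Integrable fun x : ℝ => f x * Complex.exp (-(s * (x : ℂ))) := by
  obtain ⟨C, hC⟩ := hf.exists_norm_le
  rw [← integrableOn_univ]
  exact (integrableOn_mul_exp_neg_of_norm_le hf.continuous.continuousOn (fun x _ => hC x)
    hs).of_forall_sdiff_eq_zero .univ fun x hx => by
      rw [hf.eq_zero_of_nonpos x (not_lt.1 hx.2), zero_mul]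

lemma tendsto_atTop (hf : CausalExpDecay κ f) (hκ : 0 < κ) : Tendsto f atTop (𝓝 0) := by
  obtain ⟨C, hC⟩ := hf.exists_norm_le
  refine squeeze_zero_norm hC ?_
  simpa using (Real.tendsto_exp_neg_atTop_nhds_zero.comp
    (tendsto_id.const_mul_atTop hκ)).const_mul C

lemma uniformContinuous (hf : CausalExpDecay κ f) (hκ : 0 < κ) : UniformContinuous f := by
  refine hf.continuous.uniformContinuous_of_tendsto_cocompact (x := 0) ?_
  rw [cocompact_eq_atBot_atTop]
  refine Tendsto.sup ?_ (hf.tendsto_atTop hκ)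
  exact tendsto_const_nhds.congr' ((eventually_le_atBot 0).mono fun x hx =>
    (hf.eq_zero_of_nonpos x hx).symm)

end CausalExpDecay

section Contour

variable {α r : ℝ}

lemma mem_expDomain_of_re_lt {ζ : ℂ} (h0 : ζ.re < 0) (hα : ζ.re < α) : ζ ∈ expDomain α r :=
  ⟨h0, fun h => hα.not_ge h.1⟩

lemma mem_expDomain_of_lt_abs_im {ζ : ℂ} (h0 : ζ.re < 0) (hr : r < |ζ.im|) : ζ ∈ expDomain α r :=
  ⟨h0, fun h => hr.not_ge h.2.2⟩

lemma norm_inv_smul_expPair_le {ζ : ℂ} (hζ : ζ ∈ expDomain α r) {κ δ : ℝ} (hκ : 0 < κ)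
    (hδ : 0 < δ) (hκζ : κ ≤ ‖ζ‖) (hδζ : ∀ s ∈ Rbar α r, δ ≤ ‖s - ζ‖) :
    ‖ζ⁻¹ • expPair α r ζ‖ ≤ max 1 (1 / (κ * δ)) := by
  refine max_le_max ?_ ?_
  · rw [Prod.smul_fst, norm_smul, norm_inv]
    exact inv_mul_le_one_of_le₀ (norm_expPair_fst_le α r ζ) (norm_nonneg ζ)
  · have hsnd : ‖(expPair α r ζ).2‖ ≤ 1 / δ := by
      refine (ContinuousMap.norm_le _ (by positivity)).2 fun s => ?_
      rw [expPair_snd_apply hζ, norm_div, norm_one]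
      exact one_div_le_one_div_of_le hδ (hδζ s s.2)
    rw [Prod.smul_snd, norm_smul, norm_inv, ← one_div, ← one_div_mul_one_div]
    gcongr

lemma exists_mem_closedSpan_eq_integral_tails {κ ρ : ℝ} (hκ : 0 < κ) (hρ : r < ρ) {J : ℝ → ℂ}
    (hJ : Integrable J) :
    ∃ p ∈ closedSpan α r (expDomain α r), ∀ x : ℝ≥0, p.1 x = ∫ y in (Icc (-ρ) ρ)ᶜ,
      J y * Complex.exp (((-κ : ℝ) + y * Complex.I) * ((x : ℝ) : ℂ)) := by
  set γ : ℝ → ℂ := fun y => (-κ : ℝ) + y * Complex.I with hγ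
  have hre : ∀ y, (γ y).re = -κ := fun y => by simp [hγ]
  have him : ∀ y, (γ y).im = y := fun y => by simp [hγ]
  have hnorm : ∀ y, κ ≤ ‖γ y‖ := fun y => by
    simpa [hre, abs_of_pos hκ] using Complex.abs_re_le_norm (γ y)
  have hne : ∀ y, γ y ≠ 0 := fun y => norm_pos_iff.1 (hκ.trans_le (hnorm y))
  have habs : ∀ y ∈ (Icc (-ρ) ρ)ᶜ, ρ < |y| := fun y hy => by
    simpa only [mem_compl_iff, mem_Icc, ← abs_le, not_le] using hy
  have hdist : ∀ y ∈ (Icc (-ρ) ρ)ᶜ, ∀ s ∈ Rbar α r, ρ - r ≤ ‖s - γ y‖ := fun y hy s hs => by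
    calc ρ - r ≤ |y| - |s.im| := by linarith [hs.2.2, habs y hy]
      _ ≤ |s.im - y| := by rw [abs_sub_comm]; exact abs_sub_abs_le_abs_sub y s.im
      _ ≤ ‖s - γ y‖ := by simpa [him] using Complex.abs_im_le_norm (s - γ y)
  have hγ_mem : ∀ y ∈ (Icc (-ρ) ρ)ᶜ, γ y ∈ expDomain α r := fun y hy =>
    mem_expDomain_of_lt_abs_im (by rwa [hre, neg_lt_zero]) (by
      rw [him]
      exact hρ.trans (habs y hy))
  have hmeas : MeasurableSet (Icc (-ρ) ρ)ᶜ := measurableSet_Icc.compl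
  have hcont : ContinuousOn (fun y => (γ y)⁻¹ • expPair α r (γ y)) (Icc (-ρ) ρ)ᶜ :=
    (ContinuousOn.inv₀ (by fun_prop) fun y _ => hne y).smul <|
      (differentiableOn_expPair α r).continuousOn.comp (by fun_prop) hγ_mem
  have hint : IntegrableOn (fun y => (J y / γ y) • expPair α r (γ y)) (Icc (-ρ) ρ)ᶜ := by
    have : SecondCountableTopologyEither ℝ (PairSpace α r) :=
      secondCountableTopologyEither_of_left ℝ _
    simp only [div_eq_mul_inv, mul_smul]
    refine hJ.integrableOn.smul_bdd (max 1 (1 / (κ * (ρ - r))))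
      (hcont.aestronglyMeasurable hmeas) ((ae_restrict_iff' hmeas).2 (.of_forall fun y hy => ?_))
    exact norm_inv_smul_expPair_le (hγ_mem y hy) hκ (sub_pos.2 hρ) (hnorm y) (hdist y hy)
  obtain ⟨p, hp, hp_apply⟩ := exists_mem_closedSpan_eq_integral subset_rfl
    ((ae_restrict_iff' hmeas).2 (.of_forall hγ_mem)) hint
  refine ⟨p, hp, fun x => (hp_apply x).trans ?_⟩
  congr 1 with y
  rw [← mul_assoc, div_mul_cancel₀ _ (hne y)]

lemma exists_mem_closedSpan_eq_intervalIntegral {a b : ℝ} (hab : a ≤ b) {γ : ℝ → ℂ}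
    (hγ : Continuous γ) (hγ_mem : ∀ t ∈ Icc a b, γ t ∈ expDomain α r) {H : ℂ → ℂ} {K : Set ℂ}
    (hH : ContinuousOn H K) (hγK : MapsTo γ (Icc a b) K) :
    ∃ p ∈ closedSpan α r (expDomain α r), ∀ x : ℝ≥0, p.1 x =
      ∫ t in a..b, H (γ t) * (γ t * Complex.exp (γ t * ((x : ℝ) : ℂ))) := by
  have hcont : ContinuousOn (fun t => H (γ t) • expPair α r (γ t)) (Icc a b) :=
    (hH.comp hγ.continuousOn hγK).smul
      ((differentiableOn_expPair α r).continuousOn.comp hγ.continuousOn hγ_mem)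
  simp only [intervalIntegral.integral_of_le hab]
  exact exists_mem_closedSpan_eq_integral subset_rfl
    ((ae_restrict_iff' measurableSet_Ioc).2
      (.of_forall fun t ht => hγ_mem t (Ioc_subset_Icc_self ht)))
    (hcont.integrableOn_Icc.mono_set Ioc_subset_Icc_self)

-- Cauchy's theorem moves the segment `[-κ - iρ, -κ + iρ]` to the other three sides of the box,
-- which, unlike the segment, avoid the rectangle.
lemma exists_mem_closedSpan_eq_integral_segment {a κ ρ : ℝ} (hκ : 0 < κ) (haκ : a ≤ -κ)
    (ha : a < α) (hr : 0 ≤ r) (hρ : r < ρ) {H : ℂ → ℂ}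
    (hH : DifferentiableOn ℂ H (Icc a (-κ) ×ℂ Icc (-ρ) ρ)) :
    ∃ p ∈ closedSpan α r (expDomain α r), ∀ x : ℝ≥0, p.1 x =
      ∫ y in (-ρ)..ρ, H ((-κ : ℝ) + y * Complex.I) * (((-κ : ℝ) + y * Complex.I) *
        Complex.exp (((-κ : ℝ) + y * Complex.I) * ((x : ℝ) : ℂ))) := by
  have hρ0 : 0 < ρ := hr.trans_lt hρ
  obtain ⟨left, hleft, hleft_apply⟩ := exists_mem_closedSpan_eq_intervalIntegral (α := α) (r := r)
    (γ := fun t : ℝ => a + t * Complex.I) (neg_le_self hρ0.le) (by fun_prop)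
    (fun t _ => mem_expDomain_of_re_lt (by simp; linarith) (by simpa)) hH.continuousOn
    (fun t ht => by simpa [Complex.mem_reProdIm, haκ] using ht)
  have hhorizontal : ∀ τ : ℝ, |τ| = ρ → ∃ p ∈ closedSpan α r (expDomain α r), ∀ x : ℝ≥0,
      p.1 x = ∫ t in a..(-κ), H (t + τ * Complex.I) *
        ((t + τ * Complex.I) * Complex.exp ((t + τ * Complex.I) * ((x : ℝ) : ℂ))) := fun τ hτ =>
    exists_mem_closedSpan_eq_intervalIntegral (γ := fun t : ℝ => t + τ * Complex.I) haκ
      (by fun_prop) (fun t ht => mem_expDomain_of_lt_abs_im (by simp; linarith [ht.2])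
        (by simpa [hτ])) hH.continuousOn
      (fun t ht => by simpa [Complex.mem_reProdIm, ← abs_le, hτ] using ht)
  obtain ⟨bottom, hbottom, hbottom_apply⟩ := hhorizontal (-ρ) (by rw [abs_neg, abs_of_pos hρ0])
  obtain ⟨top, htop, htop_apply⟩ := hhorizontal ρ (abs_of_pos hρ0)
  refine ⟨Complex.I • bottom - Complex.I • top + left, Submodule.add_mem _ (Submodule.sub_mem _
    (Submodule.smul_mem _ _ hbottom) (Submodule.smul_mem _ _ htop)) hleft, fun x => ?_⟩
  have hcauchy := Complex.integral_boundary_rect_eq_zero_of_differentiableOn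
    (fun z => H z * (z * Complex.exp (z * ((x : ℝ) : ℂ)))) ⟨a, -ρ⟩ ⟨-κ, ρ⟩ (by
      rw [uIcc_of_le haκ, uIcc_of_le (neg_le_self hρ0.le)]
      exact hH.mul (Differentiable.differentiableOn (by fun_prop)))
  simp only [smul_eq_mul, ← hleft_apply, ← hbottom_apply, ← htop_apply] at hcauchy
  simp only [Prod.fst_add, Prod.fst_sub, Prod.smul_fst, BoundedContinuousFunction.coe_add,
    BoundedContinuousFunction.coe_sub, BoundedContinuousFunction.coe_smul, Pi.add_apply,
    Pi.sub_apply, smul_eq_mul]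
  set right := ∫ y in (-ρ)..ρ, H ((-κ : ℝ) + y * Complex.I) * (((-κ : ℝ) + y * Complex.I) *
    Complex.exp (((-κ : ℝ) + y * Complex.I) * ((x : ℝ) : ℂ)))
  linear_combination Complex.I * hcauchy + (left.1 x - right) * Complex.I_sq

lemma exists_mem_closedSpan_eq_of_integrable_laplace {a κ ρ : ℝ} (hκ : 0 < κ) (haκ : a ≤ -κ)
    (ha : a < α) (hr : 0 ≤ r) (hρ : r < ρ) {g : ℝ → ℂ} (hg : Continuous g)
    (hg0 : ∀ x ≤ 0, g x = 0)
    (hint : Integrable fun x : ℝ => g x * Complex.exp (-((-κ : ℝ) * (x : ℂ))))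
    (hline : Integrable fun y : ℝ => Laplace g ((-κ : ℝ) + y * Complex.I)) {H : ℂ → ℂ}
    (hH : DifferentiableOn ℂ H (Icc a (-κ) ×ℂ Icc (-ρ) ρ))
    (hL : ∀ y ∈ Icc (-ρ) ρ, Laplace g ((-κ : ℝ) + y * Complex.I) =
      ((-κ : ℝ) + y * Complex.I) * H ((-κ : ℝ) + y * Complex.I)) :
    ∃ p ∈ closedSpan α r (expDomain α r), ∀ x : ℝ≥0, p.1 x = g x := by
  have hρ0 : -ρ ≤ ρ := by linarith
  obtain ⟨tails, htails, htails_apply⟩ := exists_mem_closedSpan_eq_integral_tails (α := α) hκ hρ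
    hline
  obtain ⟨segment, hsegment, hsegment_apply⟩ :=
    exists_mem_closedSpan_eq_integral_segment hκ haκ ha hr hρ hH
  refine ⟨(1 / (2 * Real.pi) : ℂ) • (segment + tails),
    Submodule.smul_mem _ _ (Submodule.add_mem _ hsegment htails), fun x => ?_⟩
  have hintegrable : Integrable fun y : ℝ => Laplace g ((-κ : ℝ) + y * Complex.I) *
      Complex.exp (((-κ : ℝ) + y * Complex.I) * ((x : ℝ) : ℂ)) :=
    hline.mul_bdd (c := 1) (Continuous.aestronglyMeasurable (by fun_prop))
      (.of_forall fun y => norm_exp_mul_nnreal_le_one (by simpa using hκ.le) x)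
  rw [laplace_inversion hg hg0 hint hline x,
    ← integral_add_compl (measurableSet_Icc (a := -ρ) (b := ρ)) hintegrable, ← htails_apply,
    integral_Icc_eq_integral_Ioc, ← intervalIntegral.integral_of_le hρ0,
    intervalIntegral.integral_congr (g := fun y : ℝ => H ((-κ : ℝ) + y * Complex.I) *
      (((-κ : ℝ) + y * Complex.I) *
        Complex.exp (((-κ : ℝ) + y * Complex.I) * ((x : ℝ) : ℂ)))) fun y hy => ?_,
    ← hsegment_apply]
  · rfl
  · rw [uIcc_of_le hρ0] at hy
    simp only [hL y hy]
    ring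

end Contour

section Approximable

variable {α r : ℝ}

/-- The pair `(g, F)`, restricted to `[0, ∞)` and to the rectangle, lies in the closed span of the
exponentials with exponents in `D`; stated by approximation, so that `g` and `F` can be functions
on all of `ℝ` and `ℂ`. -/
def Approximable (α r : ℝ) (D : Set ℂ) (g : ℝ → ℂ) (F : ℂ → ℂ) : Prop :=
  ∀ ε > 0, ∃ p ∈ closedSpan α r D,
    (∀ x : ℝ≥0, ‖g x - p.1 x‖ ≤ ε) ∧ ∀ s : Rbar α r, ‖F s - p.2 s‖ ≤ ε

lemma Approximable.of_tendstoUniformlyOn {D : Set ℂ} {ι : Type*} {l : Filter ι} [l.NeBot]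
    {g : ι → ℝ → ℂ} {F : ι → ℂ → ℂ} {g₀ : ℝ → ℂ} {F₀ : ℂ → ℂ}
    (h : ∀ᶠ i in l, Approximable α r D (g i) (F i)) (hg : TendstoUniformlyOn g g₀ l (Ici 0))
    (hF : TendstoUniformlyOn F F₀ l (Rbar α r)) : Approximable α r D g₀ F₀ := by
  intro ε hε
  have hε2 : 0 < ε / 2 := half_pos hε
  obtain ⟨i, hi, hgi, hFi⟩ := (h.and ((Metric.tendstoUniformlyOn_iff.1 hg _ hε2).and
    (Metric.tendstoUniformlyOn_iff.1 hF _ hε2))).exists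
  obtain ⟨p, hp, hp1, hp2⟩ := hi _ hε2
  refine ⟨p, hp, fun x => ?_, fun s => ?_⟩
  · have := (dist_eq_norm (g₀ x) _).symm.trans_lt (hgi x x.2)
    linarith [norm_sub_le_norm_sub_add_norm_sub (g₀ x) (g i x) (p.1 x), hp1 x]
  · have := (dist_eq_norm (F₀ s) _).symm.trans_lt (hFi s s.2)
    linarith [norm_sub_le_norm_sub_add_norm_sub (F₀ s) (F i s) (p.2 s), hp2 s]

lemma tendstoUniformlyOn_of_continuousOn_prod {X Y E : Type*} [TopologicalSpace X]
    [TopologicalSpace Y] [UniformSpace E] {f : X → Y → E} {S : Set X} {K : Set Y} {x : X}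
    {l : Filter X} (hK : IsCompact K) (hf : ContinuousOn f.uncurry (S ×ˢ K)) (hx : x ∈ S)
    (hl : l ≤ 𝓝[S] x) : TendstoUniformlyOn f (f x) l K := fun u hu => by
  obtain ⟨v, hv, hvu⟩ := hK.mem_uniformity_of_prod hf hx (symm_le_uniformity hu)
  exact eventually_of_mem (hl hv) hvu

/-- The class of pairs `(τ', F)` with room to spare on both sides: `g` decays exponentially, and
`H` is analytic on a neighbourhood `U` of the rectangle, where `L{g; s} = s H(s)`. -/
structure LaplacePair (κ : ℝ) (U : Set ℂ) (g : ℝ → ℂ) (H : ℂ → ℂ) : Prop where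
  decay : CausalExpDecay κ g
  differentiableOn : DifferentiableOn ℂ H U
  laplace_eq : ∀ s ∈ U, -κ < s.re → s ≠ 0 → Laplace g s = s * H s

lemma exists_lt_Icc_subset {U : Set ℝ} (hU : IsOpen U) {a b : ℝ} (hab : a ≤ b)
    (h : Icc a b ⊆ U) : ∃ a' < a, Icc a' b ⊆ U := by
  obtain ⟨l, hl, hlU⟩ := exists_Ioc_subset_of_mem_nhds (hU.mem_nhds (h (left_mem_Icc.2 hab)))
    (exists_lt a)
  obtain ⟨a', hla', ha'⟩ := exists_between hl
  refine ⟨a', ha', fun x hx => ?_⟩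
  rcases le_total a x with hax | hax
  · exact h ⟨hax, hx.2⟩
  · exact hlU ⟨hla'.trans_le hx.1, hax⟩

lemma exists_larger_rectangle_subset {U : Set ℂ} (hU : IsOpen U) (hα : α ≤ 1) (hr : 0 ≤ r)
    (h : Rbar α r ⊆ U) : ∃ a < α, ∃ ρ > r, Icc a 1 ×ℂ Icc (-ρ) ρ ⊆ U := by
  obtain ⟨u, v, hu, hv, hαu, hrv, huv⟩ := generalized_tube_lemma isCompact_Icc isCompact_Icc
    (hU.preimage Complex.equivRealProdCLM.symm.continuous)
    (s := Icc α 1) (t := Icc (-r) r) fun z hz => h (by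
      rw [Rbar_eq_reProdIm]
      exact hz)
  obtain ⟨a, ha, hau⟩ := exists_lt_Icc_subset hu hα hαu
  have hv' : IsOpen (v ∩ Neg.neg ⁻¹' v) := hv.inter (hv.preimage continuous_neg)
  obtain ⟨ρ, hρ, hρv⟩ := exists_lt_Icc_subset hv' (neg_nonpos.2 hr) (b := 0) fun y hy =>
    ⟨hrv ⟨hy.1, hy.2.trans hr⟩, hrv ⟨by linarith [hy.2], by linarith [hy.1]⟩⟩
  refine ⟨a, ha, -ρ, lt_neg_of_lt_neg hρ, fun z hz => huv (a := (z.re, z.im)) ⟨hau hz.1, ?_⟩⟩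
  have him : z.im ∈ Icc ρ (-ρ) := by simpa using hz.2
  rcases le_total z.im 0 with h0 | h0
  · exact (hρv ⟨him.1, h0⟩).1
  · simpa using (hρv (a := -z.im) ⟨by linarith [him.2], neg_nonpos.2 h0⟩).2

lemma LaplacePair.approximable_of_integrable (hα : α < 0) (hr : 0 < r) {κ : ℝ} (hκ : 0 < κ)
    {U : Set ℂ} (hU : IsOpen U) (hRU : Rbar α r ⊆ U) {g : ℝ → ℂ} {H : ℂ → ℂ}
    (h : LaplacePair κ U g H)
    (hline : ∀ σ : ℝ, -κ < σ → σ < 0 → Integrable fun y : ℝ => Laplace g (σ + y * Complex.I)) :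
    Approximable α r (expDomain α r) g H := by
  obtain ⟨k, hk, hkmin⟩ := exists_between (lt_min hκ (neg_pos.2 hα))
  obtain ⟨hkκ, hkα⟩ := lt_min_iff.1 hkmin
  obtain ⟨a, ha, ρ, hρ, haρU⟩ := exists_larger_rectangle_subset hU (by linarith) hr.le hRU
  have hboxU : Icc a (-k) ×ℂ Icc (-ρ) ρ ⊆ U := fun z hz =>
    haρU ⟨⟨hz.1.1, hz.1.2.trans (by linarith)⟩, hz.2⟩
  obtain ⟨p, hp, hpg⟩ := exists_mem_closedSpan_eq_of_integrable_laplace hk (by linarith) ha hr.le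
    hρ h.decay.continuous h.decay.eq_zero_of_nonpos
    (h.decay.integrable_mul_exp_neg (by simpa using hkκ)) (hline _ (by linarith) (by linarith))
    (h.differentiableOn.mono hboxU) fun y hy => h.laplace_eq _
      (hboxU ⟨by simp; linarith, by simpa using hy⟩) (by simpa using hkκ)
      fun h0 => by simpa [hk.ne'] using congrArg Complex.re h0
  have hpH := snd_eq_of_laplace_fst hα hr hp hpg
    (h.differentiableOn.mono ((Ropen_subset_Rbar α r).trans hRU))
    (h.differentiableOn.continuousOn.mono hRU) fun s hs hs0 =>
      h.laplace_eq s (hRU (Ropen_subset_Rbar α r hs)) (by linarith) fun hzero => by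
        simp [hzero] at hs0
  exact fun ε hε => ⟨p, hp, fun x => by simpa [hpg] using hε.le, fun s => by
    simpa [hpH] using hε.le⟩

end Approximable

lemma laplace_deriv {f f' : ℝ → ℂ} {s : ℂ} (hf : ContinuousOn f (Ici 0))
    (hderiv : ∀ x ∈ Ioi (0 : ℝ), HasDerivAt f (f' x) x)
    (hint : IntegrableOn (fun x : ℝ => f x * Complex.exp (-(s * (x : ℂ)))) (Ioi 0))
    (hint' : IntegrableOn (fun x : ℝ => f' x * Complex.exp (-(s * (x : ℂ)))) (Ioi 0)) :
    Laplace f' s = s * Laplace f s - f 0 := by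
  set u : ℝ → ℂ := fun x => f x * Complex.exp (-(s * (x : ℂ))) with hu
  have huderiv : ∀ x ∈ Ioi (0 : ℝ), HasDerivAt u
      (f' x * Complex.exp (-(s * (x : ℂ))) - s * u x) x := fun x hx => by
    have hexp : HasDerivAt (fun x : ℝ => Complex.exp (-(s * (x : ℂ))))
        (Complex.exp (-(s * (x : ℂ))) * -(s * 1)) x :=
      ((Complex.ofRealCLM.hasDerivAt.const_mul s).neg).cexp
    exact ((hderiv x hx).mul hexp).congr_deriv (by simp only [hu]; ring)
  have huint' := hint'.sub (hint.const_mul s)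
  have hu0 : ContinuousWithinAt u (Ici 0) 0 :=
    (hf.mul (by fun_prop)) 0 self_mem_Ici
  have h := integral_Ioi_of_hasDerivAt_of_tendsto hu0 huderiv huint'
    (tendsto_zero_of_hasDerivAt_of_integrableOn_Ioi huderiv huint' hint)
  have hadd := integral_sub hint' (hint.const_mul s)
  rw [integral_const_mul] at hadd
  have hval : u 0 = f 0 := by simp [hu]
  calc Laplace f' s = s * Laplace f s + (Laplace f' s - s * Laplace f s) := by ring
    _ = s * Laplace f s + (0 - u 0) := by rw [← h, hadd]; rfl
    _ = s * Laplace f s - f 0 := by rw [hval]; ring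

lemma laplace_comp_sub {f : ℝ → ℂ} (hf : ∀ x ≤ 0, f x = 0) {δ : ℝ} (hδ : 0 ≤ δ) (s : ℂ) :
    Laplace (fun x => f (x - δ)) s = Complex.exp (-(δ * s)) * Laplace f s := by
  rw [laplace_eq_integral (fun x hx => hf _ (by linarith)), laplace_eq_integral hf,
    ← integral_const_mul, ← integral_sub_right_eq_self (fun x : ℝ =>
      Complex.exp (-(δ * s)) * (f x * Complex.exp (-(s * (x : ℂ))))) δ]
  congr 1 with x
  rw [mul_left_comm, ← Complex.exp_add]
  push_cast
  ring_nf

section BoxAverage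

/-- The moving average of `g` over the window `[x - δ, x]`: it regularises `g` by one derivative
while keeping it supported in `[0, ∞)`. -/
noncomputable def boxAverage (δ : ℝ) (g : ℝ → ℂ) (x : ℝ) : ℂ :=
  (δ : ℂ)⁻¹ * ∫ u in (x - δ)..x, g u

/-- The entire function `z ↦ (1 - e^{-z}) / z`, with value `1` at `0`: the Laplace multiplier of
`boxAverage δ` is its value at `δ s`. -/
noncomputable def boxMultiplier : ℂ → ℂ := dslope (fun z => -Complex.exp (-z)) 0

lemma differentiable_boxMultiplier : Differentiable ℂ boxMultiplier :=
  differentiableOn_univ.1 ((Complex.differentiableOn_dslope univ_mem).2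
    (by fun_prop : Differentiable ℂ fun z => -Complex.exp (-z)).differentiableOn)

lemma mul_boxMultiplier (z : ℂ) : z * boxMultiplier z = 1 - Complex.exp (-z) := by
  simpa [boxMultiplier, ← sub_eq_neg_add] using sub_smul_dslope (fun z => -Complex.exp (-z)) 0 z

lemma boxMultiplier_zero : boxMultiplier 0 = 1 := by
  have : HasDerivAt (fun z => -Complex.exp (-z)) 1 0 := by
    simpa using (hasDerivAt_neg (0 : ℂ)).cexp.fun_neg
  rw [boxMultiplier, dslope_same, this.deriv]

variable {δ κ : ℝ} {g : ℝ → ℂ}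

lemma hasDerivAt_boxAverage (hg : Continuous g) (δ x : ℝ) :
    HasDerivAt (boxAverage δ g) ((δ : ℂ)⁻¹ * (g x - g (x - δ))) x := by
  have hprim : ∀ y : ℝ, HasDerivAt (fun y => ∫ u in 0..y, g u) (g y) y := fun y =>
    (hg.integral_hasStrictDerivAt 0 y).hasDerivAt
  have hdiff := ((hprim x).sub ((hprim (x - δ)).comp_sub_const x δ)).const_mul (δ : ℂ)⁻¹
  refine hdiff.congr_of_eventuallyEq (.of_forall fun y => ?_)
  simp only [boxAverage, Pi.sub_apply]
  rw [intervalIntegral.integral_interval_sub_left] <;> exact hg.intervalIntegrable _ _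

lemma norm_boxAverage_sub_le (hg : Continuous g) (hδ : 0 < δ) {x ε : ℝ} {c : ℂ}
    (h : ∀ u ∈ Icc (x - δ) x, ‖g u - c‖ ≤ ε) : ‖boxAverage δ g x - c‖ ≤ ε := by
  have hδ' : (δ : ℂ) ≠ 0 := by exact_mod_cast hδ.ne'
  have hmean : boxAverage δ g x - c = (δ : ℂ)⁻¹ * ∫ u in (x - δ)..x, (g u - c) := by
    rw [intervalIntegral.integral_sub (hg.intervalIntegrable _ _) (by simp)]
    simp [boxAverage, mul_sub, hδ']
  have hint : ‖∫ u in (x - δ)..x, (g u - c)‖ ≤ ε * |x - (x - δ)| :=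
    intervalIntegral.norm_integral_le_of_norm_le_const fun u hu => h u <| by
      rw [uIoc_of_le (by linarith)] at hu
      exact Ioc_subset_Icc_self hu
  rw [sub_sub_cancel, abs_of_pos hδ] at hint
  rw [hmean, norm_mul, norm_inv, Complex.norm_real, Real.norm_of_nonneg hδ.le,
    inv_mul_le_iff₀ hδ]
  linarith

lemma tendstoUniformly_boxAverage (hg : UniformContinuous g) :
    TendstoUniformly (fun δ => boxAverage δ g) g (𝓝[>] 0) := by
  refine Metric.tendstoUniformly_iff.2 fun ε hε => ?_
  obtain ⟨d, hd, hgd⟩ := Metric.uniformContinuous_iff.1 hg _ (half_pos hε)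
  filter_upwards [Ioo_mem_nhdsGT hd] with δ hδ x
  rw [dist_comm, dist_eq_norm]
  refine (norm_boxAverage_sub_le hg.continuous hδ.1 fun u hu => ?_).trans_lt (half_lt_self hε)
  rw [← dist_eq_norm]
  refine (hgd ?_).le
  rw [Real.dist_eq, abs_lt]
  constructor <;> linarith [hu.1, hu.2, hδ.1, hδ.2]

lemma CausalExpDecay.boxAverage (hg : CausalExpDecay κ g) (hκ : 0 ≤ κ) (hδ : 0 < δ) :
    CausalExpDecay κ (boxAverage δ g) where
  continuous := continuous_iff_continuousAt.2 fun x =>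
    (hasDerivAt_boxAverage hg.continuous δ x).continuousAt
  eq_zero_of_nonpos x hx := by
    have := norm_boxAverage_sub_le hg.continuous hδ (x := x) (c := 0) (ε := 0) fun u hu => by
      simp [hg.eq_zero_of_nonpos u (hu.2.trans hx)]
    simpa using this
  exists_norm_le := by
    obtain ⟨C, hC⟩ := hg.exists_norm_le
    have hC0 : 0 ≤ C := by simpa using (norm_nonneg _).trans (hC 0)
    refine ⟨C * Real.exp (κ * δ), fun x => ?_⟩
    have := norm_boxAverage_sub_le hg.continuous hδ (x := x) (c := 0)
      (ε := C * Real.exp (-(κ * (x - δ)))) fun u hu => by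
        rw [sub_zero]
        refine (hC u).trans ?_
        gcongr
        exact hu.1
    rw [sub_zero] at this
    rwa [mul_assoc, ← Real.exp_add, show κ * δ + -(κ * x) = -(κ * (x - δ)) by ring]

lemma CausalExpDecay.laplace_boxAverage (hg : CausalExpDecay κ g) (hκ : 0 ≤ κ) (hδ : 0 < δ)
    {s : ℂ} (hs : -κ < s.re) (hs0 : s ≠ 0) :
    Laplace (_root_.boxAverage δ g) s = boxMultiplier (δ * s) * Laplace g s := by
  have hA := hg.boxAverage hκ hδ
  have hδ' : (δ : ℂ) ≠ 0 := by exact_mod_cast hδ.ne'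
  have hgs := hg.integrable_mul_exp_neg hs
  have hshift : Integrable fun x : ℝ => g (x - δ) * Complex.exp (-(s * (x : ℂ))) := by
    refine ((hgs.comp_sub_right δ).const_mul (Complex.exp (-(δ * s)))).congr
      (.of_forall fun x => ?_)
    simp only
    rw [mul_left_comm, ← Complex.exp_add]
    push_cast
    ring_nf
  have hderiv : Laplace (fun x => (δ : ℂ)⁻¹ * (g x - g (x - δ))) s =
      (δ : ℂ)⁻¹ * ((1 - Complex.exp (-(δ * s))) * Laplace g s) := by
    rw [sub_mul, one_mul, ← laplace_comp_sub hg.eq_zero_of_nonpos hδ.le, Laplace, Laplace, Laplace,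
      ← integral_sub hgs.integrableOn hshift.integrableOn, ← integral_const_mul]
    simp only [mul_assoc, sub_mul]
  rw [laplace_deriv hA.continuous.continuousOn
    (fun x _ => hasDerivAt_boxAverage hg.continuous δ x)
    (hA.integrable_mul_exp_neg hs).integrableOn (((hgs.sub hshift).const_mul (δ : ℂ)⁻¹).congr
      (.of_forall fun x => by simp [sub_mul, mul_assoc])).integrableOn,
    hA.eq_zero_of_nonpos 0 le_rfl, sub_zero, ← mul_boxMultiplier] at hderiv
  refine mul_left_cancel₀ hs0 (hderiv.trans ?_)
  field_simp

lemma norm_boxMultiplier_mul_norm_le (hδ : 0 < δ) (s : ℂ) :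
    ‖s‖ * ‖boxMultiplier (δ * s)‖ ≤ δ⁻¹ * (1 + Real.exp (-(δ * s.re))) := by
  have h : ‖δ * s * boxMultiplier (δ * s)‖ ≤ 1 + Real.exp (-(δ * s.re)) := by
    rw [mul_boxMultiplier]
    refine (norm_sub_le _ _).trans_eq ?_
    simp [Complex.norm_exp]
  rw [norm_mul, norm_mul, Complex.norm_real, Real.norm_of_nonneg hδ.le] at h
  rwa [le_inv_mul_iff₀ hδ, ← mul_assoc]

lemma integrable_inv_sq_add_sq {σ : ℝ} (hσ : σ ≠ 0) :
    Integrable fun y : ℝ => (σ ^ 2 + y ^ 2)⁻¹ := by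
  refine ((integrable_inv_one_add_sq.comp_mul_left' (inv_ne_zero hσ)).const_mul
    (σ ^ 2)⁻¹).congr (.of_forall fun y => ?_)
  simp only
  rw [← mul_inv]
  congr 1
  field_simp

lemma CausalExpDecay.integrable_laplace_boxAverage_boxAverage (hg : CausalExpDecay κ g)
    (hκ : 0 ≤ κ) (hδ : 0 < δ) {δ' : ℝ} (hδ' : 0 < δ') {σ : ℝ} (hσ : -κ < σ) (hσ0 : σ ≠ 0) :
    Integrable fun y : ℝ =>
      Laplace (_root_.boxAverage δ' (_root_.boxAverage δ g)) (σ + y * Complex.I) := by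
  have hA := hg.boxAverage hκ hδ
  have hAA := hA.boxAverage hκ hδ'
  set B : ℝ → ℝ := fun d => d⁻¹ * (1 + Real.exp (-(d * σ)))
  set M := ∫ x : ℝ, ‖g x * Complex.exp (-(σ * (x : ℂ)))‖
  refine ((integrable_inv_sq_add_sq hσ0).const_mul (B δ' * (B δ * M))).mono'
    (continuous_laplace_line hAA.continuous hAA.eq_zero_of_nonpos
      (hAA.integrable_mul_exp_neg (by simpa using hσ))).aestronglyMeasurable
    (.of_forall fun y => ?_)
  set s : ℂ := σ + y * Complex.I with hs
  have hre : s.re = σ := by simp [hs]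
  have hs0 : s ≠ 0 := fun h => hσ0 (by rw [← hre, h, Complex.zero_re])
  have hsq : ‖s‖ ^ 2 = σ ^ 2 + y ^ 2 := by
    rw [Complex.sq_norm, Complex.normSq_apply, hre]
    simp [hs]
    ring
  have hm : ∀ d : ℝ, 0 < d → ‖s‖ * ‖boxMultiplier (d * s)‖ ≤ B d := fun d hd => by
    simpa only [hre] using norm_boxMultiplier_mul_norm_le hd s
  rw [hA.laplace_boxAverage hκ hδ' (by rwa [hre]) hs0, hg.laplace_boxAverage hκ hδ (by rwa [hre])
    hs0, norm_mul, norm_mul, ← hsq, ← div_eq_mul_inv, le_div_iff₀ (by positivity)]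
  calc _ = ‖s‖ * ‖boxMultiplier (δ' * s)‖ * (‖s‖ * ‖boxMultiplier (δ * s)‖ * ‖Laplace g s‖) := by
        ring
    _ ≤ B δ' * (B δ * M) := by
        gcongr
        · exact hm δ' hδ'
        · exact hm δ hδ
        · exact norm_laplace_line_le hg.eq_zero_of_nonpos y

end BoxAverage

namespace LaplacePair

variable {α r κ : ℝ} {U : Set ℂ} {g : ℝ → ℂ} {H : ℂ → ℂ}

lemma boxAverage (h : LaplacePair κ U g H) (hκ : 0 ≤ κ) {δ : ℝ} (hδ : 0 < δ) :
    LaplacePair κ U (boxAverage δ g) (fun s => boxMultiplier (δ * s) * H s) where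
  decay := h.decay.boxAverage hκ hδ
  differentiableOn := (differentiable_boxMultiplier.comp
    (differentiable_id.const_mul (δ : ℂ))).differentiableOn.mul h.differentiableOn
  laplace_eq s hsU hs hs0 := by
    rw [h.decay.laplace_boxAverage hκ hδ hs hs0, h.laplace_eq s hsU hs hs0]
    ring

lemma approximable_of_boxAverage {D : Set ℂ} (hκ : 0 < κ) (hRU : Rbar α r ⊆ U)
    (h : LaplacePair κ U g H)
    (happrox : ∀ δ : ℝ, 0 < δ →
      Approximable α r D (_root_.boxAverage δ g) (fun s => boxMultiplier (δ * s) * H s)) :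
    Approximable α r D g H := by
  have hcont : ContinuousOn (fun p : ℝ × ℂ => boxMultiplier (p.1 * p.2) * H p.2)
      (Ici 0 ×ˢ Rbar α r) :=
    (differentiable_boxMultiplier.continuous.comp (by fun_prop)).continuousOn.mul
      ((h.differentiableOn.continuousOn.mono hRU).comp continuousOn_snd fun p hp => hp.2)
  have hlim : TendstoUniformlyOn (fun (δ : ℝ) s => boxMultiplier (δ * s) * H s)
      (fun s => boxMultiplier ((0 : ℝ) * s) * H s) (𝓝[>] 0) (Rbar α r) :=
    tendstoUniformlyOn_of_continuousOn_prod (isCompact_Rbar α r) hcont self_mem_Ici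
      (nhdsWithin_mono 0 Ioi_subset_Ici_self)
  refine Approximable.of_tendstoUniformlyOn (l := 𝓝[>] 0)
    (eventually_nhdsWithin_of_forall happrox)
    (tendstoUniformly_boxAverage (h.decay.uniformContinuous hκ)).tendstoUniformlyOn ?_
  simpa only [Complex.ofReal_zero, zero_mul, boxMultiplier_zero, one_mul] using hlim

lemma approximable (hα : α < 0) (hr : 0 < r) (hκ : 0 < κ) (hU : IsOpen U) (hRU : Rbar α r ⊆ U)
    (h : LaplacePair κ U g H) : Approximable α r (expDomain α r) g H :=
  h.approximable_of_boxAverage hκ hRU fun _δ hδ =>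
    (h.boxAverage hκ.le hδ).approximable_of_boxAverage hκ hRU fun _δ' hδ' =>
      ((h.boxAverage hκ.le hδ).boxAverage hκ.le hδ').approximable_of_integrable hα hr hκ hU hRU
        fun _σ hσ hσ0 => h.decay.integrable_laplace_boxAverage_boxAverage hκ.le hδ hδ' hσ hσ0.ne

end LaplacePair

lemma tendstoUniformlyOn_Ici_of_tail {ι E : Type*} [PseudoMetricSpace E] {l : Filter ι}
    {F : ι → ℝ → E} {f : ℝ → E} {a : ℝ} (hloc : ∀ R, TendstoUniformlyOn F f l (Icc a R))
    (htail : ∀ ε > 0, ∃ R, ∀ᶠ i in l, ∀ x ≥ R, dist (f x) (F i x) < ε) :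
    TendstoUniformlyOn F f l (Ici a) := by
  refine Metric.tendstoUniformlyOn_iff.2 fun ε hε => ?_
  obtain ⟨R, hR⟩ := htail ε hε
  filter_upwards [hR, Metric.tendstoUniformlyOn_iff.1 (hloc R) ε hε] with i htail hloc x hx
  exact (le_total x R).elim (fun h => hloc x ⟨hx, h⟩) (htail x)

/-- `τ` is continuously differentiable on `[0, ∞)`, with a derivative `τ'` that vanishes at
infinity. -/
structure HasVanishingDeriv (τ τ' : ℝ → ℂ) : Prop where
  hasDerivWithinAt : ∀ x ∈ Ici (0 : ℝ), HasDerivWithinAt τ (τ' x) (Ici 0) x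
  continuousOn_deriv : ContinuousOn τ' (Ici 0)
  tendsto_deriv : Tendsto τ' atTop (𝓝 0)

namespace HasVanishingDeriv

variable {τ τ' : ℝ → ℂ}

lemma continuousOn (h : HasVanishingDeriv τ τ') : ContinuousOn τ (Ici 0) := fun x hx =>
  (h.hasDerivWithinAt x hx).continuousWithinAt

lemma exists_norm_deriv_le_of_ge (h : HasVanishingDeriv τ τ') {ε : ℝ} (hε : 0 < ε) :
    ∃ R ≥ 0, ∀ x ≥ R, ‖τ' x‖ ≤ ε := by
  obtain ⟨R, hR⟩ := eventually_atTop.1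
    (h.tendsto_deriv.eventually (Metric.closedBall_mem_nhds 0 hε))
  exact ⟨max R 0, le_max_right _ _, fun x hx => by
    simpa using hR x ((le_max_left _ _).trans hx)⟩

lemma exists_norm_deriv_le (h : HasVanishingDeriv τ τ') : ∃ M, ∀ x ≥ 0, ‖τ' x‖ ≤ M := by
  obtain ⟨R, -, hR⟩ := h.exists_norm_deriv_le_of_ge one_pos
  obtain ⟨M, hM⟩ := isCompact_Icc.exists_bound_of_continuousOn
    (h.continuousOn_deriv.mono (Icc_subset_Ici_self : Icc 0 R ⊆ Ici 0))
  exact ⟨max M 1, fun x hx => (le_total x R).elim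
    (fun hxR => (hM x ⟨hx, hxR⟩).trans (le_max_left _ _))
    fun hxR => (hR x hxR).trans (le_max_right _ _)⟩

lemma exists_norm_le_add_mul (h : HasVanishingDeriv τ τ') {ε : ℝ} (hε : 0 < ε) :
    ∃ N ≥ 0, ∀ x ≥ 0, ‖τ x‖ ≤ N + ε * x := by
  obtain ⟨R, hR0, hR⟩ := h.exists_norm_deriv_le_of_ge hε
  obtain ⟨N, hN⟩ := isCompact_Icc.exists_bound_of_continuousOn
    (h.continuousOn.mono (Icc_subset_Ici_self : Icc 0 R ⊆ Ici 0))
  refine ⟨N, (norm_nonneg _).trans (hN 0 ⟨le_rfl, hR0⟩), fun x hx => ?_⟩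
  rcases le_total x R with hxR | hxR
  · exact (hN x ⟨hx, hxR⟩).trans (le_add_of_nonneg_right (by positivity))
  · have hmvt := (convex_Ici R).norm_image_sub_le_of_norm_hasDerivWithin_le
      (fun y hy => (h.hasDerivWithinAt y (hR0.trans hy)).mono (Ici_subset_Ici.2 hR0))
      (fun y hy => hR y hy) self_mem_Ici hxR
    rw [Real.norm_of_nonneg (sub_nonneg.2 hxR)] at hmvt
    nlinarith [norm_sub_norm_le (τ x) (τ R), hN R ⟨hR0, le_rfl⟩]

lemma exists_norm_le_mul_exp (h : HasVanishingDeriv τ τ') {η : ℝ} (hη : 0 < η) :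
    ∃ C ≥ 0, ∀ x ≥ 0, ‖τ x‖ ≤ C * Real.exp (η * x) := by
  obtain ⟨N, hN0, hN⟩ := h.exists_norm_le_add_mul hη
  refine ⟨N + 1, by positivity, fun x hx => (hN x hx).trans ?_⟩
  have := Real.add_one_le_exp (η * x)
  have := Real.one_le_exp (by positivity : 0 ≤ η * x)
  nlinarith

lemma integrableOn_mul_exp_neg (h : HasVanishingDeriv τ τ') {s : ℂ} (hs : 0 < s.re) :
    IntegrableOn (fun x : ℝ => τ x * Complex.exp (-(s * (x : ℂ)))) (Ioi 0) := by
  obtain ⟨C, -, hC⟩ := h.exists_norm_le_mul_exp (half_pos hs)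
  exact integrableOn_mul_exp_neg_of_norm_le (κ := -(s.re / 2)) h.continuousOn
    (fun x hx => by simpa using hC x hx) (by linarith)

lemma integrableOn_deriv_mul_exp_neg (h : HasVanishingDeriv τ τ') {s : ℂ} (hs : 0 < s.re) :
    IntegrableOn (fun x : ℝ => τ' x * Complex.exp (-(s * (x : ℂ)))) (Ioi 0) := by
  obtain ⟨M, hM⟩ := h.exists_norm_deriv_le
  exact integrableOn_mul_exp_neg_of_norm_le (κ := 0) h.continuousOn_deriv
    (fun x hx => by simpa using hM x hx) (by simpa using hs)

lemma laplace_deriv (h : HasVanishingDeriv τ τ') {s : ℂ} (hs : 0 < s.re) :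
    Laplace τ' s = s * Laplace τ s - τ 0 :=
  _root_.laplace_deriv h.continuousOn
    (fun x hx => (h.hasDerivWithinAt x (mem_Ioi.1 hx).le).hasDerivAt (Ici_mem_nhds hx))
    (h.integrableOn_mul_exp_neg hs) (h.integrableOn_deriv_mul_exp_neg hs)

end HasVanishingDeriv

section Damping

/-- The derivative of `x ↦ e^{-ηx} τ(x)`, extended to the negative axis by its value at `0`. -/
noncomputable def dampedDeriv (τ τ' : ℝ → ℂ) (η x : ℝ) : ℂ :=
  Complex.exp (-(η * (max x 0 : ℝ))) * (τ' (max x 0) - η * τ (max x 0))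

variable {τ τ' : ℝ → ℂ} {η : ℝ}

lemma dampedDeriv_of_nonneg {x : ℝ} (hx : 0 ≤ x) :
    dampedDeriv τ τ' η x = Complex.exp (-(η * x)) * (τ' x - η * τ x) := by
  rw [dampedDeriv, max_eq_left hx]

lemma continuous_uncurry_dampedDeriv (h : HasVanishingDeriv τ τ') :
    Continuous (dampedDeriv τ τ').uncurry := by
  have hclamp : ∀ {f : ℝ → ℂ}, ContinuousOn f (Ici 0) →
      Continuous fun p : ℝ × ℝ => f (max p.2 0) := fun hf =>
    hf.comp_continuous (by fun_prop) fun p => mem_Ici.2 (le_max_right _ _)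
  have hexp : Continuous fun p : ℝ × ℝ => Complex.exp (-(p.1 * (max p.2 0 : ℝ))) := by fun_prop
  exact hexp.mul ((hclamp h.continuousOn_deriv).sub
    ((Complex.continuous_ofReal.comp continuous_fst).mul (hclamp h.continuousOn)))

lemma norm_dampedDeriv_le {x : ℝ} (hη : 0 ≤ η) (hx : 0 ≤ x) :
    ‖dampedDeriv τ τ' η x‖ ≤ Real.exp (-(η * x)) * (‖τ' x‖ + η * ‖τ x‖) := by
  rw [dampedDeriv_of_nonneg hx, norm_mul, ← neg_mul, ← Complex.ofReal_neg, norm_exp_mul_ofReal,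
    Complex.ofReal_re, neg_mul]
  gcongr
  refine (norm_sub_le _ _).trans_eq ?_
  rw [norm_mul, Complex.norm_real, Real.norm_of_nonneg hη]

lemma dist_dampedDeriv_le (hη : 0 < η) {x N ε : ℝ} (hx : 0 ≤ x) (hN : 0 ≤ N) (hτ' : ‖τ' x‖ ≤ ε)
    (hτ : ‖τ x‖ ≤ N + ε * x) : dist (τ' x) (dampedDeriv τ τ' η x) ≤ 3 * ε + η * N := by
  have hε : 0 ≤ ε := (norm_nonneg _).trans hτ'
  have : 0 ≤ η * N := mul_nonneg hη.le hN
  set e := Real.exp (-(η * x))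
  have he1 : e ≤ 1 := Real.exp_le_one_iff.2 (neg_nonpos.2 (mul_nonneg hη.le hx))
  have hxe : η * (x * e) ≤ 1 := by
    rw [mul_comm, ← le_div_iff₀ hη]
    exact mul_exp_neg_mul_le hη
  calc _ ≤ ‖τ' x‖ + ‖dampedDeriv τ τ' η x‖ := (dist_eq_norm _ _).trans_le (norm_sub_le _ _)
    _ ≤ ε + e * (ε + η * (N + ε * x)) := by
      gcongr
      refine (norm_dampedDeriv_le hη.le hx).trans ?_
      gcongr
    _ = ε + e * (ε + η * N) + ε * (η * (x * e)) := by ring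
    _ ≤ ε + 1 * (ε + η * N) + ε * 1 := by gcongr
    _ = 3 * ε + η * N := by ring

lemma causalExpDecay_dampedDeriv (h : HasVanishingDeriv τ τ') (hτ0 : τ 0 = 0) (hτ'0 : τ' 0 = 0)
    (hη : 0 < η) : CausalExpDecay (η / 2) (dampedDeriv τ τ' η) where
  continuous := (continuous_uncurry_dampedDeriv h).uncurry_left η
  eq_zero_of_nonpos x hx := by simp [dampedDeriv, max_eq_right hx, hτ0, hτ'0]
  exists_norm_le := by
    obtain ⟨M, hM⟩ := h.exists_norm_deriv_le
    obtain ⟨C, hC0, hC⟩ := h.exists_norm_le_mul_exp (half_pos hη)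
    have hM0 : 0 ≤ M := (norm_nonneg _).trans (hM 0 le_rfl)
    refine ⟨M + η * C, fun x => ?_⟩
    rcases le_total x 0 with hx | hx
    · rw [dampedDeriv, max_eq_right hx, hτ0, hτ'0, mul_zero, sub_zero, mul_zero, norm_zero]
      positivity
    · have hexp : 1 ≤ Real.exp (η / 2 * x) := Real.one_le_exp (by positivity)
      calc _ ≤ Real.exp (-(η * x)) * (‖τ' x‖ + η * ‖τ x‖) := norm_dampedDeriv_le hη.le hx
        _ ≤ Real.exp (-(η * x)) * (M * Real.exp (η / 2 * x) +
            η * (C * Real.exp (η / 2 * x))) := by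
          gcongr
          · exact (hM x hx).trans (le_mul_of_one_le_right hM0 hexp)
          · exact hC x hx
        _ = (M + η * C) * (Real.exp (-(η * x)) * Real.exp (η / 2 * x)) := by ring
        _ = _ := by
          rw [← Real.exp_add]
          ring_nf

lemma laplace_dampedDeriv (h : HasVanishingDeriv τ τ') (hτ0 : τ 0 = 0) {s : ℂ}
    (hs : 0 < (s + η).re) : Laplace (dampedDeriv τ τ' η) s = s * Laplace τ (s + η) := by
  have hshift : Laplace (dampedDeriv τ τ' η) s =
      Laplace τ' (s + η) - η * Laplace τ (s + η) := by
    rw [Laplace, Laplace, Laplace, ← integral_const_mul, ← integral_sub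
      (h.integrableOn_deriv_mul_exp_neg hs) ((h.integrableOn_mul_exp_neg hs).const_mul _)]
    refine setIntegral_congr_fun measurableSet_Ioi fun x hx => ?_
    simp only [dampedDeriv_of_nonneg (le_of_lt hx), add_mul, neg_add, Complex.exp_add]
    ring
  rw [hshift, h.laplace_deriv hs, hτ0]
  ring

lemma tendstoUniformlyOn_dampedDeriv (h : HasVanishingDeriv τ τ') :
    TendstoUniformlyOn (dampedDeriv τ τ') τ' (𝓝[>] 0) (Ici 0) := by
  have hzero : EqOn (dampedDeriv τ τ' 0) τ' (Ici 0) := fun x hx => by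
    simp [dampedDeriv_of_nonneg hx]
  refine tendstoUniformlyOn_Ici_of_tail (fun R => ?_) fun ε hε => ?_
  · exact (tendstoUniformlyOn_of_continuousOn_prod (S := univ) isCompact_Icc
      (continuous_uncurry_dampedDeriv h).continuousOn (mem_univ 0)
      (nhdsWithin_mono 0 (subset_univ _))).congr_right (hzero.mono Icc_subset_Ici_self)
  · have hε4 : 0 < ε / 4 := by positivity
    obtain ⟨R, hR0, hR⟩ := h.exists_norm_deriv_le_of_ge hε4
    obtain ⟨N, hN0, hN⟩ := h.exists_norm_le_add_mul hε4
    refine ⟨R, ?_⟩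
    filter_upwards [Ioo_mem_nhdsGT (show 0 < ε / (4 * (N + 1)) by positivity)] with η hη x hx
    have hηN : η * N < ε / 4 := by
      have := (lt_div_iff₀ (by positivity)).1 hη.2
      linarith [hη.1]
    have hx0 : 0 ≤ x := hR0.trans hx
    linarith [dist_dampedDeriv_le hη.1 hx0 hN0 (hR x hx) (hN x hx0)]

lemma HasVanishingDeriv.approximable_of_isOpen {α r : ℝ} (hα : α < 0) (hr : 0 < r)
    (h : HasVanishingDeriv τ τ') (hτ0 : τ 0 = 0) (hτ'0 : τ' 0 = 0) {U : Set ℂ} (hU : IsOpen U)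
    (hRU : Rbar α r ⊆ U) {F : ℂ → ℂ} (hF : DifferentiableOn ℂ F U)
    (hFeq : ∀ s ∈ U, 0 < s.re → F s = Laplace τ s) :
    Approximable α r (expDomain α r) τ' F := by
  obtain ⟨δ, hδ, hδU⟩ := (isCompact_Rbar α r).exists_thickening_subset_open hU hRU
  have hshift : ∀ η ∈ Ico 0 δ, ∀ s ∈ Rbar α r, s + (η : ℂ) ∈ U := fun η hη s hs =>
    hδU (Metric.mem_thickening_iff.2 ⟨s, hs, by
      simpa [dist_eq_norm, abs_of_nonneg hη.1] using hη.2⟩)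
  have hlim : TendstoUniformlyOn (fun (η : ℝ) s => F (s + η)) (fun s => F (s + (0 : ℝ)))
      (𝓝[>] 0) (Rbar α r) :=
    tendstoUniformlyOn_of_continuousOn_prod (isCompact_Rbar α r)
      (hF.continuousOn.comp (by fun_prop) fun p hp => hshift p.1 hp.1 p.2 hp.2) ⟨le_rfl, hδ⟩
      ((nhdsWithin_mono 0 Ioi_subset_Ici_self).trans (nhdsWithin_Ico_eq_nhdsGE hδ).ge)
  simp only [Complex.ofReal_zero, add_zero] at hlim
  refine Approximable.of_tendstoUniformlyOn (l := 𝓝[>] 0) ?_ (tendstoUniformlyOn_dampedDeriv h)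
    hlim
  filter_upwards [Ioo_mem_nhdsGT hδ] with η hη
  refine LaplacePair.approximable (κ := η / 2) (U := (· + (η : ℂ)) ⁻¹' U) hα hr (half_pos hη.1)
    (hU.preimage (by fun_prop)) (hshift η ⟨hη.1.le, hη.2⟩)
    ⟨causalExpDecay_dampedDeriv h hτ0 hτ'0 hη.1, hF.comp (by fun_prop) (mapsTo_preimage _ _),
      fun s hsU hs _ => ?_⟩
  have hre : 0 < (s + η).re := by
    rw [Complex.add_re, Complex.ofReal_re]
    linarith [hη.1]
  rw [laplace_dampedDeriv h hτ0 hre, hFeq _ hsU hre]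

end Damping

section Dilation

lemma laplace_comp_mul (f : ℝ → ℂ) {c : ℝ} (hc : 0 < c) (s : ℂ) :
    Laplace (fun x => f (c * x)) s = (c : ℂ)⁻¹ * Laplace f (s / c) := by
  have hc' : (c : ℂ) ≠ 0 := by exact_mod_cast hc.ne'
  have h := integral_comp_mul_left_Ioi
    (fun x : ℝ => f x * Complex.exp (-(s / c * (x : ℂ)))) 0 hc
  rw [mul_zero, Complex.real_smul, Complex.ofReal_inv] at h
  rw [Laplace, Laplace, ← h]
  congr 1 with x
  push_cast
  rw [← mul_assoc, div_mul_cancel₀ _ hc']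

variable {α r : ℝ} {τ τ' : ℝ → ℂ} {F : ℂ → ℂ}

lemma HasVanishingDeriv.comp_mul (h : HasVanishingDeriv τ τ') {c : ℝ} (hc : 0 < c) :
    HasVanishingDeriv (fun x => τ (c * x)) (fun x => c * τ' (c * x)) where
  hasDerivWithinAt x hx := by
    simpa [Function.comp_def] using (h.hasDerivWithinAt (c * x) (mul_nonneg hc.le hx)).scomp x
      ((hasDerivWithinAt_id x (Ici 0)).const_mul c) fun y hy => mul_nonneg hc.le hy
  continuousOn_deriv := continuousOn_const.mul
    (h.continuousOn_deriv.comp (by fun_prop) fun x hx => mul_nonneg hc.le hx)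
  tendsto_deriv := by
    simpa using (h.tendsto_deriv.comp (tendsto_id.const_mul_atTop hc)).const_mul (c : ℂ)

lemma tendstoUniformlyOn_dilation (h : HasVanishingDeriv τ τ') :
    TendstoUniformlyOn (fun (c x : ℝ) => c * τ' (c * x)) τ' (𝓝[>] 1) (Ici 0) := by
  refine tendstoUniformlyOn_Ici_of_tail (fun R => ?_) fun ε hε => ?_
  · have hcont : ContinuousOn (fun p : ℝ × ℝ => (p.1 : ℂ) * τ' (p.1 * p.2)) (Ici 1 ×ˢ Icc 0 R) :=
      ContinuousOn.mul (by fun_prop) (h.continuousOn_deriv.comp (by fun_prop)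
        fun p hp => mul_nonneg (zero_le_one.trans hp.1) hp.2.1)
    have hlim : TendstoUniformlyOn (fun (c x : ℝ) => (c : ℂ) * τ' (c * x))
        (fun x => (1 : ℝ) * τ' (1 * x)) (𝓝[>] 1) (Icc 0 R) :=
      tendstoUniformlyOn_of_continuousOn_prod isCompact_Icc hcont self_mem_Ici
        (nhdsWithin_mono 1 Ioi_subset_Ici_self)
    simpa only [Complex.ofReal_one, one_mul] using hlim
  · have hε4 : 0 < ε / 4 := by positivity
    obtain ⟨R, hR0, hR⟩ := h.exists_norm_deriv_le_of_ge hε4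
    refine ⟨R, ?_⟩
    filter_upwards [Ioo_mem_nhdsGT one_lt_two] with c hc x hx
    have hc0 : 0 ≤ c := zero_le_one.trans hc.1.le
    have hcx : R ≤ c * x := hx.trans (le_mul_of_one_le_left (hR0.trans hx) hc.1.le)
    rw [dist_eq_norm]
    calc _ ≤ ‖τ' x‖ + ‖c * τ' (c * x)‖ := norm_sub_le _ _
      _ = ‖τ' x‖ + c * ‖τ' (c * x)‖ := by
        rw [norm_mul, Complex.norm_real, Real.norm_of_nonneg hc0]
      _ ≤ ε / 4 + 2 * (ε / 4) := by
        gcongr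
        exacts [hR x hx, hc.2.le, hR _ hcx]
      _ < ε := by linarith

lemma div_ofReal_mem_Rbar (hα : α < 0) (hr : 0 < r) {c : ℝ} (hc : 1 ≤ c) {s : ℂ}
    (hs : s ∈ Rbar α r) : s / (c : ℂ) ∈ Rbar α r := by
  have hc0 : 0 < c := one_pos.trans_le hc
  refine ⟨?_, ?_, ?_⟩
  · rw [Complex.div_ofReal_re, le_div_iff₀ hc0]
    nlinarith [hs.1]
  · rw [Complex.div_ofReal_re, div_le_iff₀ hc0]
    linarith [hs.2.1]
  · rw [Complex.div_ofReal_im, abs_div, abs_of_pos hc0, div_le_iff₀ hc0]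
    nlinarith [hs.2.2]

lemma div_ofReal_mem_Ropen (hα : α < 0) (hr : 0 < r) {c : ℝ} (hc : 1 < c) {s : ℂ}
    (hs : s ∈ Rbar α r) : s / (c : ℂ) ∈ Ropen α r := by
  have hc0 : 0 < c := one_pos.trans hc
  refine ⟨?_, ?_, ?_⟩
  · rw [Complex.div_ofReal_re, lt_div_iff₀ hc0]
    nlinarith [hs.1]
  · rw [Complex.div_ofReal_re, div_lt_iff₀ hc0]
    linarith [hs.2.1]
  · rw [Complex.div_ofReal_im, abs_div, abs_of_pos hc0, div_lt_iff₀ hc0]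
    nlinarith [hs.2.2]

/-- Membership in `V_{α,r}` of a function `τ` with derivative `τ'`, where `F` extends the Laplace
transform of `τ` to the rectangle. -/
structure MemV (α r : ℝ) (τ τ' : ℝ → ℂ) (F : ℂ → ℂ) : Prop extends HasVanishingDeriv τ τ' where
  differentiableOn : DifferentiableOn ℂ F (Ropen α r)
  continuousOn_rect : ContinuousOn F (Rbar α r)
  eq_laplace : ∀ s ∈ Rbar α r, 0 < s.re → F s = Laplace τ s

lemma MemV.approximable_of_eq_zero (hα : α < 0) (hr : 0 < r) (h : MemV α r τ τ' F)
    (hτ0 : τ 0 = 0) (hτ'0 : τ' 0 = 0) : Approximable α r (expDomain α r) τ' F := by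
  have hlim : TendstoUniformlyOn (fun (c : ℝ) s => (c : ℂ)⁻¹ * F (s / c))
      (fun s => ((1 : ℝ) : ℂ)⁻¹ * F (s / (1 : ℝ))) (𝓝[>] 1) (Rbar α r) := by
    have hne : ∀ p ∈ Ici (1 : ℝ) ×ˢ Rbar α r, (p.1 : ℂ) ≠ 0 := fun p hp => by
      exact_mod_cast (one_pos.trans_le hp.1).ne'
    have hfst : ContinuousOn (fun p : ℝ × ℂ => (p.1 : ℂ)) (Ici 1 ×ˢ Rbar α r) := by fun_prop
    exact tendstoUniformlyOn_of_continuousOn_prod (isCompact_Rbar α r)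
      ((hfst.inv₀ hne).mul (h.continuousOn_rect.comp (continuousOn_snd.div hfst hne)
        fun p hp => div_ofReal_mem_Rbar hα hr hp.1 hp.2)) self_mem_Ici
      (nhdsWithin_mono 1 Ioi_subset_Ici_self)
  simp only [Complex.ofReal_one, inv_one, one_mul, div_one] at hlim
  refine Approximable.of_tendstoUniformlyOn (l := 𝓝[>] 1) ?_
    (tendstoUniformlyOn_dilation h.toHasVanishingDeriv) hlim
  filter_upwards [self_mem_nhdsWithin] with c (hc : 1 < c)
  have hc0 : 0 < c := one_pos.trans hc
  refine (h.comp_mul hc0).approximable_of_isOpen hα hr (by simpa using hτ0) (by simp [hτ'0])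
    (U := (· / (c : ℂ)) ⁻¹' Ropen α r) ((isOpen_Ropen α r).preimage (by fun_prop))
    (fun s hs => div_ofReal_mem_Ropen hα hr hc hs)
    ((h.differentiableOn.comp (by fun_prop) (mapsTo_preimage _ _)).const_mul (c : ℂ)⁻¹)
    fun s hs hs0 => ?_
  rw [laplace_comp_mul τ hc0, h.eq_laplace _ (Ropen_subset_Rbar α r hs) (by
    rw [Complex.div_ofReal_re]
    exact div_pos hs0 hc0)]

end Dilation

section Exponentials

variable {α r : ℝ} {D : Set ℂ} {τ τ' σ σ' : ℝ → ℂ} {F G : ℂ → ℂ} {ζ : ℂ}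

lemma hasVanishingDeriv_exp (hζ : ζ.re < 0) :
    HasVanishingDeriv (fun x => Complex.exp (ζ * x)) (fun x => ζ * Complex.exp (ζ * x)) where
  hasDerivWithinAt x _ := by
    simpa [mul_comm] using
      ((Complex.ofRealCLM.hasDerivAt (x := x)).const_mul ζ).cexp.hasDerivWithinAt
  continuousOn_deriv := by fun_prop
  tendsto_deriv := by
    refine (tendsto_zero_iff_norm_tendsto_zero.2 ?_).const_mul ζ |>.trans (by simp)
    simp only [norm_exp_mul_ofReal]
    exact Real.tendsto_exp_atBot.comp (tendsto_id.const_mul_atTop_of_neg hζ)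

lemma laplace_exp {s : ℂ} (hs : ζ.re < s.re) :
    Laplace (fun x => Complex.exp (ζ * x)) s = 1 / (s - ζ) := by
  have h := integral_exp_mul_complex_Ioi (a := ζ - s) (by simpa using hs) 0
  simp only [Complex.ofReal_zero, mul_zero, Complex.exp_zero] at h
  rw [← neg_sub ζ s, div_neg, ← neg_div, ← h, Laplace]
  congr 1 with x
  rw [← Complex.exp_add]
  ring_nf

lemma memV_exp (hζ : ζ ∈ expDomain α r) :
    MemV α r (fun x => Complex.exp (ζ * x)) (fun x => ζ * Complex.exp (ζ * x))
      (fun s => 1 / (s - ζ)) where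
  toHasVanishingDeriv := hasVanishingDeriv_exp hζ.1
  differentiableOn := DifferentiableOn.div (by fun_prop) (by fun_prop) fun s hs =>
    sub_ne_zero.2 (ne_of_mem_of_not_mem (Ropen_subset_Rbar α r hs) hζ.2)
  continuousOn_rect := ContinuousOn.div (by fun_prop) (by fun_prop) fun s hs =>
    sub_ne_zero.2 (ne_of_mem_of_not_mem hs hζ.2)
  eq_laplace s _ hs := (laplace_exp (lt_trans hζ.1 hs)).symm

lemma MemV.sub_const_mul (hτ : MemV α r τ τ' F) (hσ : MemV α r σ σ' G) (c : ℂ) :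
    MemV α r (fun x => τ x - c * σ x) (fun x => τ' x - c * σ' x) (fun s => F s - c * G s) where
  hasDerivWithinAt x hx :=
    (hτ.hasDerivWithinAt x hx).sub ((hσ.hasDerivWithinAt x hx).const_mul c)
  continuousOn_deriv := hτ.continuousOn_deriv.sub (hσ.continuousOn_deriv.const_mul c)
  tendsto_deriv := by simpa using hτ.tendsto_deriv.sub (hσ.tendsto_deriv.const_mul c)
  differentiableOn := hτ.differentiableOn.sub (hσ.differentiableOn.const_mul c)
  continuousOn_rect := hτ.continuousOn_rect.sub (hσ.continuousOn_rect.const_mul c)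
  eq_laplace s hs hs0 := by
    rw [hτ.eq_laplace s hs hs0, hσ.eq_laplace s hs hs0, Laplace, Laplace, Laplace,
      ← integral_const_mul, ← integral_sub (hτ.integrableOn_mul_exp_neg hs0)
        ((hσ.integrableOn_mul_exp_neg hs0).const_mul c)]
    simp only [sub_mul, mul_assoc]

lemma Approximable.of_sub_const_mul_exp (hD : D ⊆ expDomain α r) (hζ : ζ ∈ D) {g : ℝ → ℂ} (c : ℂ)
    (h : Approximable α r D (fun x => g x - c * (ζ * Complex.exp (ζ * x)))
      (fun s => F s - c * (1 / (s - ζ)))) : Approximable α r D g F := by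
  intro ε hε
  obtain ⟨p, hp, hp1, hp2⟩ := h ε hε
  refine ⟨p + c • expPair α r ζ,
    add_mem hp (Submodule.smul_mem _ c (expPair_mem_closedSpan hζ)), fun x => ?_, fun s => ?_⟩
  · convert hp1 x using 2
    simp only [Prod.fst_add, Prod.smul_fst, BoundedContinuousFunction.coe_add, Pi.add_apply,
      BoundedContinuousFunction.coe_smul, expPair_fst_apply (hD hζ), smul_eq_mul]
    ring
  · convert hp2 s using 2
    simp only [Prod.snd_add, Prod.smul_snd, ContinuousMap.add_apply, ContinuousMap.smul_apply,
      expPair_snd_apply (hD hζ), smul_eq_mul]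
    ring

-- A combination of `e_{α-1}` and `e_{α-2}` matches the values of `τ` and `τ'` at `0`.
lemma MemV.approximable (hα : α < 0) (hr : 0 < r) (h : MemV α r τ τ' F) :
    Approximable α r (expDomain α r) τ' F := by
  have h1 : (α - 1 : ℂ) ∈ expDomain α r := mem_expDomain_of_re_lt (by simp; linarith) (by simp)
  have h2 : (α - 2 : ℂ) ∈ expDomain α r := mem_expDomain_of_re_lt (by simp; linarith) (by simp)
  refine .of_sub_const_mul_exp subset_rfl h1 (τ' 0 - (α - 2) * τ 0)
    (.of_sub_const_mul_exp subset_rfl h2 ((α - 1) * τ 0 - τ' 0)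
      (((h.sub_const_mul (memV_exp h1) _).sub_const_mul (memV_exp h2) _).approximable_of_eq_zero
        hα hr ?_ ?_)) <;>
  · simp only [Complex.ofReal_zero, mul_zero, Complex.exp_zero]
    ring

lemma Approximable.mono {D' : Set ℂ} {g : ℝ → ℂ} (h : Approximable α r D g F)
    (hD : closedSpan α r D ≤ closedSpan α r D') : Approximable α r D' g F := fun ε hε => by
  obtain ⟨p, hp, hpgF⟩ := h ε hε
  exact ⟨p, hD hp, hpgF⟩

lemma fst_sum_smul_expPair_apply {n : ℕ} (c ζs : Fin n → ℂ) (hζs : ∀ j, ζs j ∈ expDomain α r)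
    (x : ℝ≥0) : (∑ j, c j • expPair α r (ζs j)).1 x =
      ∑ j, c j * ζs j * Complex.exp (ζs j * ((x : ℝ) : ℂ)) := by
  rw [Prod.fst_sum]
  simp only [BoundedContinuousFunction.coe_sum, Finset.sum_apply, Prod.smul_fst,
    BoundedContinuousFunction.coe_smul, smul_eq_mul, expPair_fst_apply (hζs _), mul_assoc]

lemma snd_sum_smul_expPair_apply {n : ℕ} (c ζs : Fin n → ℂ) (hζs : ∀ j, ζs j ∈ expDomain α r)
    (s : Rbar α r) : (∑ j, c j • expPair α r (ζs j)).2 s = ∑ j, c j / ((s : ℂ) - ζs j) := by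
  rw [Prod.snd_sum]
  simp only [ContinuousMap.coe_sum, Finset.sum_apply, Prod.smul_snd, ContinuousMap.coe_smul,
    Pi.smul_apply, smul_eq_mul, expPair_snd_apply (hζs _), mul_one_div]

lemma Approximable.exists_sum (hD : D ⊆ expDomain α r) {g : ℝ → ℂ}
    (h : Approximable α r D g F) {ε : ℝ} (hε : 0 < ε) :
    ∃ (n : ℕ) (ζs c : Fin n → ℂ), (∀ j, ζs j ∈ D) ∧
      (∀ x : ℝ, 0 ≤ x → ‖g x - ∑ j, c j * ζs j * Complex.exp (ζs j * (x : ℂ))‖ ≤ ε) ∧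
      ∀ s ∈ Rbar α r, ‖F s - ∑ j, c j / (s - ζs j)‖ ≤ ε := by
  obtain ⟨p, hp, hpg, hpF⟩ := h (ε / 2) (half_pos hε)
  obtain ⟨q, hq, hpq⟩ := Metric.mem_closure_iff.1
    (hp : p ∈ closure (Submodule.span ℂ (expPair α r '' D) : Set (PairSpace α r))) _ (half_pos hε)
  obtain ⟨n, c, v, rfl⟩ := Submodule.mem_span_set'.1 hq
  choose ζs hζD hζ using fun j => (v j).2
  simp only [← hζ] at hpq
  obtain ⟨hpq1, hpq2⟩ := max_lt_iff.1 hpq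
  refine ⟨n, ζs, c, hζD, fun x hx => ?_, fun s hs => ?_⟩
  · lift x to ℝ≥0 using hx
    rw [← fst_sum_smul_expPair_apply c ζs fun j => hD (hζD j)]
    have := (dist_eq_norm _ _).symm.trans_le
      ((BoundedContinuousFunction.dist_coe_le_dist x).trans hpq1.le)
    linarith [norm_sub_le_norm_sub_add_norm_sub (g x) (p.1 x)
      ((∑ j, c j • expPair α r (ζs j)).1 x), hpg x]
  · lift s to Rbar α r using hs
    rw [← snd_sum_smul_expPair_apply c ζs fun j => hD (hζD j)]
    have := (dist_eq_norm _ _).symm.trans_le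
      ((ContinuousMap.dist_apply_le_dist s).trans hpq2.le)
    linarith [norm_sub_le_norm_sub_add_norm_sub (F s) (p.2 s)
      ((∑ j, c j • expPair α r (ζs j)).2 s), hpF s]

end Exponentials

theorem V0_in_closure_of_span_exponentials_general
    (α r : ℝ) (hα : α < 0) (hr : 0 < r) (D : Set ℂ) (z : ℂ) (hz0 : z.re < 0)
    (hzR : z ∉ Rbar α r) (hacc : AccPt z (𝓟 D)) (τ τ' : ℝ → ℂ) (F : ℂ → ℂ)
    (hder : ∀ x ∈ Ici (0 : ℝ), HasDerivWithinAt τ (τ' x) (Ici 0) x)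
    (hcont : ContinuousOn τ' (Ici 0)) (hto0 : Tendsto τ' atTop (𝓝 0))
    (hFan : DifferentiableOn ℂ F (Ropen α r)) (hFcont : ContinuousOn F (Rbar α r))
    (hFeq : ∀ s ∈ Rbar α r, 0 < s.re → F s = Laplace τ s) (ε : ℝ) (hε : 0 < ε) :
    ∃ (n : ℕ) (ζs : Fin n → ℂ) (c : Fin n → ℂ),
      (∀ j : Fin n, ζs j ∈ D) ∧
      ∃ ε₁ ε₂ : ℝ, 0 ≤ ε₁ ∧ 0 ≤ ε₂ ∧ ε₁ + ε₂ < ε ∧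
        (∀ x : ℝ, 0 ≤ x →
          ‖τ' x - ∑ j : Fin n, c j * ζs j * Complex.exp (ζs j * (x : ℂ))‖ ≤ ε₁) ∧
        (∀ s ∈ Rbar α r, ‖F s - ∑ j : Fin n, c j / (s - ζs j)‖ ≤ ε₂) := by
  have hτ : MemV α r τ τ' F := ⟨⟨hder, hcont, hto0⟩, hFan, hFcont, hFeq⟩
  have hz : z ∈ expDomain α r := ⟨hz0, hzR⟩
  have hacc' : AccPt z (𝓟 (expDomain α r ∩ D)) :=
    hacc.nhds_inter ((isOpen_expDomain α r).mem_nhds hz)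
  have happrox : Approximable α r (expDomain α r ∩ D) τ' F :=
    (hτ.approximable hα hr).mono (closedSpan_expDomain_le_of_accPt hα hz hacc')
  have hε3 : 0 < ε / 3 := by positivity
  obtain ⟨n, ζs, c, hζs, hg, hF⟩ := happrox.exists_sum inter_subset_left hε3
  exact ⟨n, ζs, c, fun j => (hζs j).2, ε / 3, ε / 3, hε3.le, hε3.le, by linarith, hg, hF⟩

/-- `V⁰_{α,r}` is contained in the closure of `span{e_ζ : ζ ∈ D}` in `V_{α,r}`,
for any `D ⊆ {Re ζ < β}` (with `β < α`) having an accumulation point in that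
half-plane: every `τ ∈ V_{α,r}` with `τ(0) = τ'(0) = 0` (with extension `F`) can
be approximated in `‖·‖_{α,r}` by finite linear combinations `Σ c_j e_{ζ_j}`
with `ζ_j ∈ D`. -/
theorem V0_in_closure_of_span_exponentials
    (α r β : ℝ) (hα : α < 0) (hr : 0 < r) (hβ : β < α)
    (D : Set ℂ) (hD : D ⊆ {ζ : ℂ | ζ.re < β})
    (hacc : ∃ z : ℂ, z.re < β ∧ AccPt z (Filter.principal D))
    (τ τ' : ℝ → ℂ) (F : ℂ → ℂ)
    (hder : ∀ x ∈ Set.Ici (0 : ℝ), HasDerivWithinAt τ (τ' x) (Set.Ici 0) x)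
    (hcont : ContinuousOn τ' (Set.Ici 0))
    (hto0 : Tendsto τ' atTop (nhds 0))
    (hτ0 : τ 0 = 0) (hτ'0 : τ' 0 = 0)
    (hFan : DifferentiableOn ℂ F (Ropen α r))
    (hFcont : ContinuousOn F (Rbar α r))
    (hFeq : ∀ s ∈ Rbar α r, 0 < s.re → F s = Laplace τ s)
    (ε : ℝ) (hε : 0 < ε) :
    ∃ (n : ℕ) (ζs : Fin n → ℂ) (c : Fin n → ℂ),
      (∀ j : Fin n, ζs j ∈ D) ∧
      ∃ ε₁ ε₂ : ℝ, 0 ≤ ε₁ ∧ 0 ≤ ε₂ ∧ ε₁ + ε₂ < ε ∧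
        (∀ x : ℝ, 0 ≤ x →
          ‖τ' x - ∑ j : Fin n, c j * ζs j * Complex.exp (ζs j * (x : ℂ))‖ ≤ ε₁) ∧
        (∀ s ∈ Rbar α r, ‖F s - ∑ j : Fin n, c j / (s - ζs j)‖ ≤ ε₂) := by
  obtain ⟨z, hz, hz_acc⟩ := hacc
  exact V0_in_closure_of_span_exponentials_general α r hα hr D z (by linarith)
    (fun h => (hz.trans hβ).not_ge h.1) hz_acc τ τ' F hder hcont hto0 hFan hFcont hFeq ε hε
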